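/- arXiv:2110.11032 — 5 statements merged into one kernel-verified Lean document; each statement's English description precedes it below -/
import Mathlib

section
/- Let n ≥ 1 and let h : ℝ → ℝ be a smooth 2π-periodic function. Define U_n(θ₁, …, θ_n) = −(1/n) ∑_{1≤μ≠ν≤n} (1/2) cot((θ_μ − θ_ν)/2) (h(θ_μ) − h(θ_ν)), where for θ_μ = θ_ν the summand is interpreted as its continuous extension −h'(θ_μ). Then 𝔼_n[U_n] = 0. -/
open MeasureTheory

/-- The expectation with respect to the eigenvalue distribution of a Haar-random
`n × n` unitary matrix (CUE). -/
noncomputable def cueExpect (n : ℕ) (F : (Fin n → ℝ) → ℝ) : ℝ :=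
  (1 / ((2 * Real.pi) ^ n * n.factorial)) *
    ∫ θ in Set.pi Set.univ (fun _ : Fin n => Set.Icc (-Real.pi) Real.pi),
      (∏ p ∈ Finset.univ.filter (fun p : Fin n × Fin n => p.1 < p.2),
        ‖Complex.exp (Complex.I * (θ p.1 : ℂ))
          - Complex.exp (Complex.I * (θ p.2 : ℂ))‖ ^ 2) * F θ

/-- Squared Vandermonde in real form. -/
noncomputable def vdm (n : ℕ) (θ : Fin n → ℝ) : ℝ :=
  ∏ p ∈ Finset.univ.filter (fun p : Fin n × Fin n => p.1 < p.2),
    (2 - 2 * Real.cos (θ p.1 - θ p.2))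

lemma norm_sq_exp_sub (a b : ℝ) :
    ‖Complex.exp (Complex.I * (a : ℂ)) - Complex.exp (Complex.I * (b : ℂ))‖ ^ 2
      = 2 - 2 * Real.cos (a - b) := by
  rw [mul_comm Complex.I, mul_comm Complex.I, Complex.exp_mul_I, Complex.exp_mul_I,
    ← Complex.normSq_eq_norm_sq, Complex.normSq_apply, Real.cos_sub]
  simp only [Complex.sub_re, Complex.add_re, Complex.mul_re, Complex.I_re, Complex.I_im,
    Complex.sub_im, Complex.add_im, Complex.mul_im, ← Complex.ofReal_cos, ← Complex.ofReal_sin,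
    Complex.ofReal_re, Complex.ofReal_im]
  nlinarith [Real.sin_sq_add_cos_sq a, Real.sin_sq_add_cos_sq b]

lemma vdm_contDiff (n : ℕ) : ContDiff ℝ (⊤ : ℕ∞) (vdm n) := by
  unfold vdm
  apply contDiff_prod
  intro p _
  fun_prop

lemma vdm_nonneg (n : ℕ) (θ : Fin n → ℝ) : 0 ≤ vdm n θ := by
  apply Finset.prod_nonneg
  intro p _
  linarith [Real.cos_le_one (θ p.1 - θ p.2)]

lemma vdm_fderiv (n : ℕ) (θ v : Fin n → ℝ) :
    fderiv ℝ (vdm n) θ v =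
      ∑ p ∈ Finset.univ.filter (fun p : Fin n × Fin n => p.1 < p.2),
        (∏ q ∈ (Finset.univ.filter (fun p : Fin n × Fin n => p.1 < p.2)).erase p,
          (2 - 2 * Real.cos (θ q.1 - θ q.2))) *
          (2 * Real.sin (θ p.1 - θ p.2) * (v p.1 - v p.2)) := by
  have key : ∀ p : Fin n × Fin n, HasFDerivAt
      (fun θ : Fin n → ℝ => 2 - 2 * Real.cos (θ p.1 - θ p.2))
      ((2 * Real.sin (θ p.1 - θ p.2)) • (ContinuousLinearMap.proj (R := ℝ) (φ := fun _ : Fin n => ℝ) p.1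
        - ContinuousLinearMap.proj (R := ℝ) (φ := fun _ : Fin n => ℝ) p.2)) θ := by
    intro p
    have h1 := ((hasFDerivAt_apply (𝕜 := ℝ) (F' := fun _ : Fin n => ℝ) p.1 θ).sub
      (hasFDerivAt_apply (𝕜 := ℝ) (F' := fun _ : Fin n => ℝ) p.2 θ))
    have h2 : HasDerivAt (fun x : ℝ => 2 - 2 * Real.cos x) (2 * Real.sin (θ p.1 - θ p.2))
        (θ p.1 - θ p.2) := by
      have := ((Real.hasDerivAt_cos (θ p.1 - θ p.2)).const_mul 2).const_sub 2
      simpa using this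
    exact HasDerivAt.comp_hasFDerivAt (f := fun θ : Fin n → ℝ => θ p.1 - θ p.2) θ h2 h1
  have := HasFDerivAt.finsetProd
    (u := Finset.univ.filter (fun p : Fin n × Fin n => p.1 < p.2)) (fun p _ => key p)
  unfold vdm
  rw [this.fderiv]
  simp [ContinuousLinearMap.sum_apply]

lemma vdm_fderiv_one (n : ℕ) (θ : Fin n → ℝ) : fderiv ℝ (vdm n) θ (fun _ => 1) = 0 := by
  rw [vdm_fderiv]; simp

lemma cot_half (x : ℝ) (hx : 2 - 2 * Real.cos x ≠ 0) :
    2 * Real.sin x = (2 - 2 * Real.cos x) * (Real.cos (x / 2) / Real.sin (x / 2)) := by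
  have e : x = 2 * (x / 2) := by ring
  have hc : Real.cos x = 1 - 2 * Real.sin (x / 2) ^ 2 := by
    conv_lhs => rw [e]
    rw [Real.cos_two_mul]; nlinarith [Real.sin_sq_add_cos_sq (x / 2)]
  have hs : Real.sin x = 2 * Real.sin (x / 2) * Real.cos (x / 2) := by
    conv_lhs => rw [e]
    rw [Real.sin_two_mul]
  have h0 : Real.sin (x / 2) ≠ 0 := by
    intro h; apply hx; rw [hc, h]; ring
  rw [hc, hs]; field_simp; ring

lemma sum_ne_symm (n : ℕ) (f : Fin n × Fin n → ℝ) (hf : ∀ p, f p.swap = f p) :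
    ∑ p ∈ Finset.univ.filter (fun p : Fin n × Fin n => p.1 ≠ p.2), f p =
      ∑ p ∈ Finset.univ.filter (fun p : Fin n × Fin n => p.1 < p.2), 2 * f p := by
  have h1 : Finset.univ.filter (fun p : Fin n × Fin n => p.1 ≠ p.2) =
      Finset.univ.filter (fun p : Fin n × Fin n => p.1 < p.2) ∪
      Finset.univ.filter (fun p : Fin n × Fin n => p.2 < p.1) := by
    ext p; simp [lt_or_lt_iff_ne]
  rw [h1, Finset.sum_union]
  · have h2 : ∑ p ∈ Finset.univ.filter (fun p : Fin n × Fin n => p.2 < p.1), f p =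
        ∑ p ∈ Finset.univ.filter (fun p : Fin n × Fin n => p.1 < p.2), f p := by
      apply Finset.sum_nbij' Prod.swap Prod.swap <;> simp
      intro a b _; exact (hf (a, b)).symm
    rw [h2, ← Finset.sum_add_distrib]
    exact Finset.sum_congr rfl fun p _ => by ring
  · rw [Finset.disjoint_left]
    intro p hp hq
    simp at hp hq
    exact absurd hp (not_lt.mpr hq.le)

lemma vdm_pointwise (n : ℕ) (h : ℝ → ℝ) (θ : Fin n → ℝ) :
    vdm n θ * (∑ p ∈ Finset.univ.filter (fun p : Fin n × Fin n => p.1 ≠ p.2),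
        (if θ p.1 = θ p.2 then deriv h (θ p.1)
         else (1 / 2) * (Real.cos ((θ p.1 - θ p.2) / 2) / Real.sin ((θ p.1 - θ p.2) / 2))
           * (h (θ p.1) - h (θ p.2)))) = fderiv ℝ (vdm n) θ (fun i => h (θ i)) := by
  by_cases hD : vdm n θ = 0
  · have : IsLocalMin (vdm n) θ := by
      apply Filter.Eventually.of_forall
      intro x; rw [hD]; exact vdm_nonneg n x
    rw [hD, this.fderiv_eq_zero]; simp
  · have hne : ∀ p ∈ Finset.univ.filter (fun p : Fin n × Fin n => p.1 < p.2),
        2 - 2 * Real.cos (θ p.1 - θ p.2) ≠ 0 := by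
      unfold vdm at hD
      exact Finset.prod_ne_zero_iff.mp hD
    rw [sum_ne_symm, vdm_fderiv, Finset.mul_sum]
    · apply Finset.sum_congr rfl
      intro p hp
      have h1 := hne p hp
      have h2 : θ p.1 ≠ θ p.2 := by
        intro h; apply h1; simp [h]
      rw [if_neg h2, cot_half _ h1]
      unfold vdm
      rw [← Finset.mul_prod_erase _ _ hp]
      ring
    · rintro ⟨a, b⟩
      simp only [Prod.fst_swap, Prod.snd_swap]
      by_cases hab : θ a = θ b
      · simp [hab]
      · rw [if_neg hab, if_neg (Ne.symm hab)]
        have : (θ b - θ a) / 2 = -((θ a - θ b) / 2) := by ring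
        rw [this, Real.cos_neg, Real.sin_neg, div_neg]
        ring

lemma vdm_face (m : ℕ) (i : Fin (m + 1)) (x : Fin m → ℝ) :
    vdm (m + 1) (i.insertNth Real.pi x) = vdm (m + 1) (i.insertNth (-Real.pi) x) := by
  unfold vdm
  apply Finset.prod_congr rfl
  rintro ⟨a, b⟩ -
  congr 2
  dsimp only
  rcases Fin.eq_self_or_eq_succAbove i a with ha | ⟨a, rfl⟩ <;>
  rcases Fin.eq_self_or_eq_succAbove i b with hb | ⟨b, rfl⟩
  · rw [ha, hb]; simp
  · subst ha
    simp only [Fin.insertNth_apply_same, Fin.insertNth_apply_succAbove]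
    rw [← Real.cos_sub_two_pi]; congr 1; ring
  · subst hb
    simp only [Fin.insertNth_apply_same, Fin.insertNth_apply_succAbove]
    rw [← Real.cos_add_two_pi]; congr 1; ring
  · simp only [Fin.insertNth_apply_succAbove]

lemma integral_zero (m : ℕ) (h : ℝ → ℝ)
    (hsm : ContDiff ℝ (⊤ : ℕ∞) h) (hper : Function.Periodic h (2 * Real.pi)) :
    ∫ θ in Set.Icc (fun _ : Fin (m + 1) => -Real.pi) (fun _ => Real.pi),
      fderiv ℝ (vdm (m + 1)) θ (fun i => h (θ i)) = 0 := by
  have hpi : h Real.pi = h (-Real.pi) := by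
    rw [← hper (-Real.pi)]; congr 1; ring
  let K : Fin (m + 1) → (Fin (m + 1) → ℝ) → ℝ := fun i θ =>
    -∑ j : Fin m, h (θ (i.succAbove j))
  have hK : ∀ i, ContDiff ℝ (⊤ : ℕ∞) (K i) := by
    intro i
    apply ContDiff.neg
    apply ContDiff.sum
    intro j _
    exact hsm.comp (contDiff_apply ℝ ℝ _)
  have hD := vdm_contDiff (m + 1)
  let f : Fin (m + 1) → (Fin (m + 1) → ℝ) → ℝ := fun i θ => K i θ * vdm (m + 1) θ
  have hf : ∀ i, ContDiff ℝ (⊤ : ℕ∞) (f i) := fun i => (hK i).mul hD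
  have hKd : ∀ i θ, fderiv ℝ (K i) θ (Pi.single i 1) = 0 := by
    intro i θ
    have hd : DifferentiableAt ℝ (K i) θ := (hK i).differentiable (by simp) θ
    rw [← hd.lineDeriv_eq_fderiv, lineDeriv]
    have : (fun t : ℝ => K i (θ + t • Pi.single i 1)) = fun _ => K i θ := by
      funext t
      simp [K]
    rw [this]; simp
  have hfd : ∀ θ, ∑ i, fderiv ℝ (f i) θ (Pi.single i 1) =
      fderiv ℝ (vdm (m + 1)) θ (fun i => h (θ i)) := by
    intro θ
    have h1 : ∀ i, fderiv ℝ (f i) θ (Pi.single i 1) =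
        (h (θ i) - ∑ j, h (θ j)) * fderiv ℝ (vdm (m + 1)) θ (Pi.single i 1) := by
      intro i
      have e : fderiv ℝ (f i) θ = _ := fderiv_fun_mul ((hK i).differentiable (by simp) θ)
        (hD.differentiable (by simp) θ)
      rw [e]
      simp only [_root_.add_apply, _root_.smul_apply, hKd, smul_eq_mul]
      rw [Fin.sum_univ_succAbove _ i]
      simp only [K]; ring
    have h2 : ∀ v : Fin (m + 1) → ℝ, fderiv ℝ (vdm (m + 1)) θ v =
        ∑ i, v i * fderiv ℝ (vdm (m + 1)) θ (Pi.single i 1) := by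
      intro v
      conv_lhs => rw [pi_eq_sum_univ' v]
      rw [map_sum]
      refine Finset.sum_congr rfl fun i _ => ?_
      rw [map_smul, smul_eq_mul]
    have h3 := vdm_fderiv_one (m + 1) θ
    rw [h2] at h3
    rw [h2]
    simp only [h1, sub_mul, Finset.sum_sub_distrib, ← Finset.mul_sum]
    simp only [one_mul] at h3
    rw [h3]; ring
  have main := integral_divergence_of_hasFDerivAt_off_countable'
    (fun _ : Fin (m + 1) => -Real.pi) (fun _ => Real.pi)
    (fun _ => by simp only; linarith [Real.pi_pos]) f (fun i θ => fderiv ℝ (f i) θ) ∅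
    Set.countable_empty (fun i => (hf i).continuous.continuousOn)
    (fun x _ i => ((hf i).differentiable (by simp) x).hasFDerivAt)
    (by
      apply Continuous.integrableOn_Icc
      refine continuous_finsetSum _ fun i _ => ?_
      exact ((hf i).continuous_fderiv (by simp)).clm_apply continuous_const)
  simp only [hfd] at main
  rw [main]
  apply Finset.sum_eq_zero
  intro i _
  rw [sub_eq_zero]
  congr 1
  funext x
  simp only [f, vdm_face, K, Fin.insertNth_apply_succAbove]

/-- For a smooth `2π`-periodic `h`, the CUE expectation of
`U_n(θ) = −(1/n) ∑_{μ≠ν} (1/2)cot((θ_μ−θ_ν)/2)(h(θ_μ)−h(θ_ν))` vanishes, where the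
summand is interpreted by its continuous extension at coinciding angles. -/
theorem stmt10 (n : ℕ) (hn : 1 ≤ n) (h : ℝ → ℝ)
    (hsm : ContDiff ℝ (⊤ : ℕ∞) h) (hper : Function.Periodic h (2 * Real.pi)) :
    cueExpect n (fun θ => -(1 / (n : ℝ)) *
      ∑ p ∈ Finset.univ.filter (fun p : Fin n × Fin n => p.1 ≠ p.2),
        (if θ p.1 = θ p.2 then deriv h (θ p.1)
         else (1 / 2) * (Real.cos ((θ p.1 - θ p.2) / 2) / Real.sin ((θ p.1 - θ p.2) / 2))
           * (h (θ p.1) - h (θ p.2)))) = 0 := by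
  obtain ⟨m, rfl⟩ : ∃ m, n = m + 1 := ⟨n - 1, by omega⟩
  unfold cueExpect
  simp only [norm_sq_exp_sub]
  have key : ∀ θ : Fin (m + 1) → ℝ, (∏ p ∈ Finset.univ.filter
      (fun p : Fin (m + 1) × Fin (m + 1) => p.1 < p.2), (2 - 2 * Real.cos (θ p.1 - θ p.2))) *
      (-(1 / ((m + 1 : ℕ) : ℝ)) *
      ∑ p ∈ Finset.univ.filter (fun p : Fin (m + 1) × Fin (m + 1) => p.1 ≠ p.2),
        (if θ p.1 = θ p.2 then deriv h (θ p.1)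
         else (1 / 2) * (Real.cos ((θ p.1 - θ p.2) / 2) / Real.sin ((θ p.1 - θ p.2) / 2))
           * (h (θ p.1) - h (θ p.2)))) =
      -(1 / ((m + 1 : ℕ) : ℝ)) * fderiv ℝ (vdm (m + 1)) θ (fun i => h (θ i)) := by
    intro θ
    rw [← vdm_pointwise]
    unfold vdm
    ring
  simp only [key]
  rw [integral_const_mul, Set.pi_univ_Icc, integral_zero m h hsm hper]
  simp
end

section
/- Let φ be holomorphic and injective on the exterior disk Δ = {z ∈ ℂ : |z| > 1}, with Laurent expansion φ(z) = z + φ₀ + ∑_{k≥1} φ_{-k} z^{-k} at infinity, and let n ≥ 1. Then the function E_n is twice continuously differentiable on (1, ∞) and satisfies r E_n''(r) + E_n'(r) ≥ 0 for all r > 1. -/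
open MeasureTheory Filter

/-- The partition function `Z_n(γ_r)` of the Coulomb gas (at `β = 2`) on the analytic
curve `γ_r`, the image of the unit circle under `φ_r(z) = φ(rz)/r`:
`Z_n(r) = (1/(n! r^{n(n-1)})) ∫_{[−π,π]^n} ∏_{μ<ν} |φ(re^{iθ_μ}) − φ(re^{iθ_ν})|²
∏_μ |φ'(re^{iθ_μ})| dθ`. -/
noncomputable def Zn (φ : ℂ → ℂ) (n : ℕ) (r : ℝ) : ℝ :=
  (1 / (n.factorial * r ^ (n * (n - 1)))) *
    ∫ θ in Set.pi Set.univ (fun _ : Fin n => Set.Icc (-Real.pi) Real.pi),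
      (∏ p ∈ Finset.univ.filter (fun p : Fin n × Fin n => p.1 < p.2),
        ‖φ ((r : ℂ) * Complex.exp (Complex.I * (θ p.1 : ℂ)))
          - φ ((r : ℂ) * Complex.exp (Complex.I * (θ p.2 : ℂ)))‖ ^ 2) *
      ∏ μ, ‖deriv φ ((r : ℂ) * Complex.exp (Complex.I * (θ μ : ℂ)))‖

/-- `E_n(r) = log(Z_n(r)/(2π)^n)`, the "finite `n` Loewner energy" of `γ_r`. -/
noncomputable def En (φ : ℂ → ℂ) (n : ℕ) (r : ℝ) : ℝ :=
  Real.log (Zn φ n r / (2 * Real.pi) ^ n)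

open scoped ContDiff


lemma aux_root {g : ℂ → ℂ} {z : ℂ} (hg : AnalyticAt ℂ g z) (h0 : g z ≠ 0) (m : ℕ) (hm : m ≠ 0) :
    ∃ q : ℂ → ℂ, AnalyticAt ℂ q z ∧ q z ≠ 0 ∧ ∀ᶠ w in nhds z, q w ^ m = g w := by
  obtain ⟨a, ha⟩ := IsAlgClosed.exists_pow_nat_eq (g z) (Nat.pos_of_ne_zero hm)
  have ha0 : a ≠ 0 := by
    rintro rfl
    exact h0 (by rw [← ha, zero_pow hm])
  have hd : AnalyticAt ℂ (fun w => g w / g z) z := hg.div analyticAt_const h0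
  have hl : AnalyticAt ℂ (fun w => Complex.log (g w / g z)) z := by
    apply hd.clog
    simp [div_self h0]
  refine ⟨fun w => a * Complex.exp (Complex.log (g w / g z) / m), ?_, ?_, ?_⟩
  · exact analyticAt_const.mul (hl.div analyticAt_const (by exact_mod_cast hm)).cexp
  · exact mul_ne_zero ha0 (Complex.exp_ne_zero _)
  · filter_upwards [hg.continuousAt.eventually_ne h0] with w hw
    rw [mul_pow, ha, ← Complex.exp_nat_mul, mul_div_cancel₀ _ (by exact_mod_cast hm),
      Complex.exp_log (div_ne_zero hw h0), mul_div_cancel₀ _ h0]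

lemma aux_deriv_ne {f : ℂ → ℂ} {U : Set ℂ} (hU : IsOpen U) (hf : DifferentiableOn ℂ f U)
    (hinj : Set.InjOn f U) {z : ℂ} (hz : z ∈ U) : deriv f z ≠ 0 := by
  intro hd
  have hfa : AnalyticAt ℂ f z := hf.analyticAt (hU.mem_nhds hz)
  have hfs : AnalyticAt ℂ (fun w => f w - f z) z := hfa.sub analyticAt_const
  have hnt : analyticOrderAt (fun w => f w - f z) z ≠ ⊤ := by
    intro h
    rw [analyticOrderAt_eq_top] at h
    have h2 : ∀ᶠ w in nhdsWithin z {z}ᶜ, False := by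
      filter_upwards [h.filter_mono nhdsWithin_le_nhds, self_mem_nhdsWithin,
        (hU.mem_nhds hz |> mem_nhdsWithin_of_mem_nhds)] with w hw hne hwU
      exact hne (hinj hwU hz (sub_eq_zero.1 hw))
    exact (h2.exists).elim fun _ h => h
  obtain ⟨g, hg, hg0, hfg⟩ := hfs.analyticOrderAt_ne_top.1 hnt
  set m := analyticOrderNatAt (fun w => f w - f z) z with hm
  have hm0 : m ≠ 0 := by
    intro h
    have := hfg.self_of_nhds
    simp [h] at this
    exact hg0 this.symm
  have hm1 : m ≠ 1 := by
    intro h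
    rw [h] at hfg
    have h1 : HasDerivAt (fun w => f w - f z) 0 z := by
      simpa [hd] using (hfa.differentiableAt.hasDerivAt.sub_const (f z))
    have h2 : HasDerivAt (fun w => (w - z) ^ 1 • g w) (g z) z := by
      have := ((hasDerivAt_id z).sub_const z).mul hg.differentiableAt.hasDerivAt
      simpa [Pi.mul_def] using this
    exact hg0 (h2.unique (h1.congr_of_eventuallyEq hfg.symm))
  obtain ⟨q, hq, hq0, hqm⟩ := aux_root hg hg0 m hm0
  have hψ : HasStrictDerivAt (fun w => (w - z) * q w) (q z) z := by
    have h1 : HasStrictDerivAt (fun w : ℂ => w - z) 1 z := (hasStrictDerivAt_id z).sub_const z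
    have := h1.mul hq.hasStrictDerivAt
    simpa [Pi.mul_def] using this
  have hmap := hψ.map_nhds_eq hq0
  simp only [sub_self, zero_mul] at hmap
  have hprim := Complex.isPrimitiveRoot_exp m hm0
  set om := Complex.exp (2 * Real.pi * Complex.I / m)
  have hS : {w | w ∈ U ∧ f w - f z = ((w - z) * q w) ^ m} ∈ nhds z := by
    filter_upwards [hU.mem_nhds hz, hfg, hqm] with w h1 h2 h3
    refine ⟨h1, ?_⟩
    rw [h2, mul_pow, h3, smul_eq_mul]
  have hI := image_mem_map (m := fun w => (w - z) * q w) hS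
  rw [hmap] at hI
  have hI2 : ∀ᶠ x in nhds (0:ℂ), om * x ∈ (fun w => (w - z) * q w) ''
      {w | w ∈ U ∧ f w - f z = ((w - z) * q w) ^ m} := by
    have : Tendsto (fun x => om * x) (nhds 0) (nhds 0) := by
      simpa using (continuous_const_mul om).tendsto 0
    exact this.eventually hI
  have hex : ∀ᶠ x in nhdsWithin (0:ℂ) {0}ᶜ, x ≠ 0 ∧ x ∈ (fun w => (w - z) * q w) ''
      {w | w ∈ U ∧ f w - f z = ((w - z) * q w) ^ m} ∧ om * x ∈ (fun w => (w - z) * q w) ''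
      {w | w ∈ U ∧ f w - f z = ((w - z) * q w) ^ m} := by
    filter_upwards [self_mem_nhdsWithin, mem_nhdsWithin_of_mem_nhds hI,
      hI2.filter_mono nhdsWithin_le_nhds] with x h1 h2 h3
    exact ⟨h1, h2, h3⟩
  obtain ⟨x, hx0, ⟨w1, ⟨hw1, hf1⟩, e1⟩, ⟨w2, ⟨hw2, hf2⟩, e2⟩⟩ := hex.exists
  simp only at e1 e2
  rw [e1] at hf1
  rw [e2, mul_pow, hprim.pow_eq_one, one_mul] at hf2
  have hw : w1 = w2 := hinj hw1 hw2 (by linear_combination hf1 - hf2)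
  subst hw
  rw [e1] at e2
  have : om = 1 := by
    have : (om - 1) * x = 0 := by linear_combination -e2
    exact sub_eq_zero.1 ((mul_eq_zero.1 this).resolve_right hx0)
  exact hprim.ne_one (by omega) this

lemma aux_shift {n : ℕ} (f : (Fin n → ℝ) → ℝ) (hf : Continuous f)
    (hper : ∀ θ θ' : Fin n → ℝ, (∀ j, ((θ j : ℝ) : AddCircle (2 * Real.pi)) = (θ' j : ℝ)) → f θ = f θ')
    (α : ℝ) :
    ∫ θ in Set.pi Set.univ (fun _ : Fin n => Set.Icc (-Real.pi) Real.pi), f (fun j => α + θ j)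
     = ∫ θ in Set.pi Set.univ (fun _ : Fin n => Set.Icc (-Real.pi) Real.pi), f θ := by
  have : Fact (0 < 2 * Real.pi) := ⟨Real.two_pi_pos⟩
  let f' : (Fin n → AddCircle (2 * Real.pi)) → ℝ := fun x =>
    f (fun j => (AddCircle.measurableEquivIoc (2 * Real.pi) (-Real.pi) (x j)).1)
  have hf'm : Measurable f' := by
    apply hf.measurable.comp
    refine measurable_pi_lambda _ fun j => ?_
    exact measurable_subtype_coe.comp
      ((AddCircle.measurableEquivIoc (2 * Real.pi) (-Real.pi)).measurable.comp (measurable_pi_apply j))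
  have hf' : ∀ θ : Fin n → ℝ, f' (fun j => (θ j : AddCircle (2 * Real.pi))) = f θ := by
    intro θ
    apply hper
    intro j
    exact (AddCircle.measurableEquivIoc (2 * Real.pi) (-Real.pi)).symm_apply_apply _
  have hbox : (volume : Measure (Fin n → ℝ)).restrict
      (Set.pi Set.univ (fun _ : Fin n => Set.Icc (-Real.pi) Real.pi)) =
      Measure.pi (fun _ : Fin n => volume.restrict (Set.Ioc (-Real.pi) (-Real.pi + 2 * Real.pi))) := by
    rw [volume_pi, Measure.restrict_pi_pi]
    congr 1
    ext1 j
    rw [show -Real.pi + 2 * Real.pi = Real.pi by ring]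
    exact Measure.restrict_congr_set Ioc_ae_eq_Icc.symm
  have hmp := measurePreserving_pi (fun _ : Fin n => volume.restrict (Set.Ioc (-Real.pi) (-Real.pi + 2 * Real.pi)))
    (fun _ : Fin n => (volume : Measure (AddCircle (2 * Real.pi))))
    (fun _ => AddCircle.measurePreserving_mk (2 * Real.pi) (-Real.pi))
  rw [hbox]
  have key : ∀ h : (Fin n → AddCircle (2 * Real.pi)) → ℝ, Measurable h →
    ∫ θ, h (fun j => ((θ j : ℝ) : AddCircle (2 * Real.pi))) ∂(Measure.pi (fun _ : Fin n => volume.restrict (Set.Ioc (-Real.pi) (-Real.pi + 2 * Real.pi)))) = ∫ x, h x ∂(Measure.pi (fun _ : Fin n => (volume : Measure (AddCircle (2 * Real.pi))))) := by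
    intro h hh
    rw [← hmp.map_eq, integral_map hmp.measurable.aemeasurable hh.aestronglyMeasurable]
  let a : Fin n → AddCircle (2 * Real.pi) := fun _ => (α : AddCircle (2 * Real.pi))
  have h1 := key f' hf'm
  have h2 := key (fun x => f' (a + x)) (hf'm.comp (measurable_const_add a))
  have e1 : ∀ θ : Fin n → ℝ, f' (a + fun j => (θ j : AddCircle (2 * Real.pi))) = f (fun j => α + θ j) := by
    intro θ
    rw [← hf']
    congr 1
  simp only [hf'] at h1
  simp only [e1] at h2
  rw [h1, h2]
  exact integral_add_left_eq_self f' a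

lemma aux_param {X : Type*} [NormedAddCommGroup X] [NormedSpace ℝ X] [MeasurableSpace X] [BorelSpace X]
    [SecondCountableTopology X]
    (μ : Measure X) [IsLocallyFiniteMeasure μ] (K : Set X) (hK : IsCompact K)
    (Ω : Set ℂ) (hΩ : IsOpen Ω) (u : ℂ × X → ℝ) (hu : ContDiffOn ℝ ∞ u (Ω ×ˢ Set.univ))
    (w e : ℂ) (s : ℝ) (hs : w + s * e ∈ Ω) :
    HasDerivAt (fun s : ℝ => ∫ θ in K, u (w + s * e, θ) ∂μ)
      (∫ θ in K, fderiv ℝ u (w + s * e, θ) (e, 0) ∂μ) s := by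
  have hO : IsOpen (Ω ×ˢ (Set.univ : Set X)) := hΩ.prod isOpen_univ
  have hcont : ContinuousOn (fun p => fderiv ℝ u p (e, 0)) (Ω ×ˢ (Set.univ : Set X)) :=
    (hu.continuousOn_fderiv_of_isOpen hO (by simp)).clm_apply continuousOn_const
  have hl : Continuous (fun s : ℝ => w + s * e) := by fun_prop
  have hnh : (fun s : ℝ => w + s * e) ⁻¹' Ω ∈ nhds s := (hΩ.preimage hl).mem_nhds hs
  obtain ⟨ε, hε, hball⟩ := Metric.nhds_basis_closedBall.mem_iff.1 hnh
  have hmaps : ∀ s' ∈ Metric.closedBall s ε, ∀ θ : X, (w + (s':ℝ) * e, θ) ∈ Ω ×ˢ (Set.univ : Set X) :=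
    fun s hs θ => ⟨hball hs, trivial⟩
  have hc2 : ContinuousOn (fun q : ℝ × X => fderiv ℝ u (w + q.1 * e, q.2) (e, 0))
      (Metric.closedBall s ε ×ˢ K) := by
    refine hcont.comp (by fun_prop) ?_
    rintro ⟨s', θ⟩ ⟨h1, h2⟩
    exact hmaps s' h1 θ
  obtain ⟨C, hC⟩ := ((isCompact_closedBall s ε).prod hK).exists_bound_of_continuousOn hc2
  have hcu : ∀ s' ∈ Metric.closedBall s ε, Continuous (fun θ => u (w + (s':ℝ) * e, θ)) := by
    intro s' hs'
    rw [← continuousOn_univ]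
    exact hu.continuousOn.comp (by fun_prop) (fun θ _ => hmaps s' hs' θ)
  have hcd : ∀ s' ∈ Metric.closedBall s ε, Continuous (fun θ => fderiv ℝ u (w + (s':ℝ) * e, θ) (e, 0)) := by
    intro s' hs'
    rw [← continuousOn_univ]
    exact hcont.comp (by fun_prop) (fun θ _ => hmaps s' hs' θ)
  have hss : s ∈ Metric.closedBall s ε := Metric.mem_closedBall_self hε.le
  refine (hasDerivAt_integral_of_dominated_loc_of_deriv_le (s := Metric.closedBall s ε)
    (bound := fun _ => C) (F' := fun s θ => fderiv ℝ u (w + (s:ℝ) * e, θ) (e, 0))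
    (Metric.closedBall_mem_nhds s hε) ?_ ?_ ?_ ?_ ?_ ?_).2
  · filter_upwards [Metric.closedBall_mem_nhds s hε] with s' hs'
    exact (hcu s' hs').aestronglyMeasurable
  · exact (hcu s hss).continuousOn.integrableOn_compact hK
  · exact (hcd s hss).aestronglyMeasurable
  · rw [ae_restrict_iff' hK.measurableSet]
    exact Eventually.of_forall fun θ hθ s' hs' => hC (s', θ) ⟨hs', hθ⟩
  · exact integrableOn_const hK.measure_ne_top
  · refine Eventually.of_forall fun θ s' hs' => ?_
    have hd : HasFDerivAt u (fderiv ℝ u (w + (s':ℝ) * e, θ)) (w + (s':ℝ) * e, θ) :=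
      ((hu.contDiffAt (hO.mem_nhds (hmaps s' hs' θ))).differentiableAt (by simp)).hasFDerivAt
    have hline : HasDerivAt (fun s : ℝ => (w + (s:ℂ) * e, θ)) (e, (0:X)) s' := by
      refine HasDerivAt.prodMk ?_ (hasDerivAt_const _ _)
      simpa using ((Complex.ofRealCLM.hasDerivAt (x := s')).mul_const e).const_add w
    exact hd.comp_hasDerivAt s' hline

lemma aux_line {h : ℂ → ℂ} {w : ℂ} (e : ℂ) (hh : DifferentiableAt ℂ h w) :
    HasDerivAt (fun s : ℝ => h (w + s * e)) (e * deriv h w) 0 := by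
  have hline : HasDerivAt (fun s : ℝ => (w + (s:ℂ) * e)) e 0 := by
    simpa using ((Complex.ofRealCLM.hasDerivAt (x := 0)).mul_const e).const_add w
  have h2 : HasDerivAt h (deriv h w) (w + ((0:ℝ):ℂ) * e) := by simpa using hh.hasDerivAt
  have := HasDerivAt.scomp (0:ℝ) h2 hline
  simpa [Function.comp_def] using this

lemma aux_lineU {X : Type*} [NormedAddCommGroup X] [NormedSpace ℝ X] {u : ℂ × X → ℝ} {w : ℂ} {θ : X}
    (e : ℂ) (hu : DifferentiableAt ℝ u (w, θ)) :
    HasDerivAt (fun s : ℝ => u (w + s * e, θ)) (fderiv ℝ u (w, θ) (e, 0)) 0 := by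
  have hline : HasDerivAt (fun s : ℝ => (w + (s:ℂ) * e, θ)) (e, (0:X)) 0 := by
    refine HasDerivAt.prodMk ?_ (hasDerivAt_const _ _)
    simpa using ((Complex.ofRealCLM.hasDerivAt (x := 0)).mul_const e).const_add w
  have h2 : HasFDerivAt u (fderiv ℝ u (w, θ)) (w + ((0:ℝ):ℂ) * e, θ) := by
    simpa using hu.hasFDerivAt
  exact h2.comp_hasDerivAt (0:ℝ) hline

lemma aux_re {A : ℝ → ℂ} {A' : ℂ} {s : ℝ} (h : HasDerivAt A A' s) :
    HasDerivAt (fun s => (A s).re) A'.re s := Complex.reCLM.hasFDerivAt.comp_hasDerivAt s h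

lemma aux_im {A : ℝ → ℂ} {A' : ℂ} {s : ℝ} (h : HasDerivAt A A' s) :
    HasDerivAt (fun s => (A s).im) A'.im s := Complex.imCLM.hasFDerivAt.comp_hasDerivAt s h

lemma aux_tend (w e : ℂ) : Tendsto (fun s : ℝ => w + s * e) (nhds 0) (nhds w) := by
  have : Continuous (fun s : ℝ => w + s * e) := by fun_prop
  simpa using this.tendsto 0

lemma aux_smoothD {X : Type*} [NormedAddCommGroup X] [NormedSpace ℝ X]
    {O : Set (ℂ × X)} (hO : IsOpen O) {u : ℂ × X → ℝ} (hu : ContDiffOn ℝ ∞ u O) (e : ℂ) :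
    ContDiffOn ℝ ∞ (fun p => fderiv ℝ u p (e, 0)) O :=
  (hu.fderiv_of_isOpen hO (m := ∞) (by simp)).clm_apply contDiffOn_const

lemma aux_point {X : Type*} [NormedAddCommGroup X] [NormedSpace ℝ X]
    {Ω : Set ℂ} (hΩ : IsOpen Ω) {u : ℂ × X → ℝ} (hu : ContDiffOn ℝ ∞ u (Ω ×ˢ Set.univ))
    {w : ℂ} (hw : w ∈ Ω) (θ : X) {h : ℂ → ℂ} (hh : AnalyticAt ℂ h w)
    (huh : ∀ᶠ z in nhds w, u (z, θ) = ‖h z‖ ^ 2) (l : ℝ) :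
    0 ≤ l ^ 2 * u (w, θ) + 2 * l * fderiv ℝ u (w, θ) (1, 0)
      + (fderiv ℝ (fun p => fderiv ℝ u p (1, 0)) (w, θ) (1, 0)
      + fderiv ℝ (fun p => fderiv ℝ u p (Complex.I, 0)) (w, θ) (Complex.I, 0)) := by
  have hO : IsOpen (Ω ×ˢ (Set.univ : Set X)) := hΩ.prod isOpen_univ
  have hmem : ∀ z ∈ Ω, (z, θ) ∈ Ω ×ˢ (Set.univ : Set X) := fun z hz => ⟨hz, trivial⟩
  have first : ∀ e : ℂ, ∀ᶠ z in nhds w, fderiv ℝ u (z, θ) (e, 0) =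
      2 * ((h z).re * (e * deriv h z).re + (h z).im * (e * deriv h z).im) := by
    intro e
    filter_upwards [huh.eventually_nhds, hΩ.mem_nhds hw, hh.eventually_analyticAt] with z h1 h2 h3
    have d1 := aux_lineU e ((hu.contDiffAt (hO.mem_nhds (hmem z h2))).differentiableAt (by simp))
    have d2 := aux_line e h3.differentiableAt
    have d3 := ((aux_re d2).pow 2).add ((aux_im d2).pow 2)
    have d4 := d1.congr_of_eventuallyEq (f₁ := fun s : ℝ => (h (z + s * e)).re ^ 2 + (h (z + s * e)).im ^ 2) (by
      filter_upwards [(aux_tend z e).eventually h1] with s hs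
      rw [hs, Complex.sq_norm, Complex.normSq_apply]; ring)
    have := d4.unique d3
    rw [this]
    simp
    ring
  have second : ∀ e : ℂ, fderiv ℝ (fun p => fderiv ℝ u p (e, 0)) (w, θ) (e, 0) =
      2 * ((e * deriv h w).re ^ 2 + (e * deriv h w).im ^ 2
       + (h w).re * (e * (e * deriv (deriv h) w)).re + (h w).im * (e * (e * deriv (deriv h) w)).im) := by
    intro e
    have d1 := aux_lineU e (((aux_smoothD hO hu e).contDiffAt (hO.mem_nhds (hmem w hw))).differentiableAt (by simp))
    have d2 := aux_line e hh.differentiableAt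
    have d2' := aux_line e (h := fun z => e * deriv h z) (hh.deriv.differentiableAt.const_mul e)
    rw [deriv_const_mul _ hh.deriv.differentiableAt] at d2'
    have d3 := (((aux_re d2).mul (aux_re d2')).add ((aux_im d2).mul (aux_im d2'))).const_mul 2
    have d4 := d1.congr_of_eventuallyEq (f₁ := fun s : ℝ => 2 * ((h (w + s * e)).re * (e * deriv h (w + s * e)).re
      + (h (w + s * e)).im * (e * deriv h (w + s * e)).im)) (by
      filter_upwards [(aux_tend w e).eventually (first e)] with s hs
      rw [hs])
    have := d4.unique d3
    rw [this]
    simp only [Complex.ofReal_zero, zero_mul, add_zero]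
    ring
  rw [second 1, second Complex.I, (first 1).self_of_nhds, huh.self_of_nhds, Complex.sq_norm,
    Complex.normSq_apply]
  simp
  nlinarith [sq_nonneg (l * (h w).re + 2 * (deriv h w).re), sq_nonneg (l * (h w).im + 2 * (deriv h w).im)]

/-- Integrand in logarithmic coordinates. -/
noncomputable def uu (φ : ℂ → ℂ) (n : ℕ) (p : ℂ × (Fin n → ℝ)) : ℝ :=
  (∏ q ∈ Finset.univ.filter (fun q : Fin n × Fin n => q.1 < q.2),
    ‖φ (Complex.exp (p.1 + Complex.I * (p.2 q.1 : ℂ)))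
      - φ (Complex.exp (p.1 + Complex.I * (p.2 q.2 : ℂ)))‖ ^ 2) *
  ∏ μ, ‖deriv φ (Complex.exp (p.1 + Complex.I * (p.2 μ : ℂ)))‖

lemma isOpen_ext : IsOpen {z : ℂ | 1 < ‖z‖} := isOpen_lt continuous_const continuous_norm

lemma isOpen_half : IsOpen {z : ℂ | 0 < z.re} := isOpen_lt continuous_const Complex.continuous_re

lemma exp_mem {w : ℂ} (hw : 0 < w.re) (t : ℝ) :
    Complex.exp (w + Complex.I * t) ∈ {z : ℂ | 1 < ‖z‖} := by
  simp [Complex.norm_exp, hw]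

lemma ana_f {φ : ℂ → ℂ} (hφ : DifferentiableOn ℂ φ {z : ℂ | 1 < ‖z‖}) {w : ℂ} (hw : 0 < w.re)
    (t : ℝ) : AnalyticAt ℂ φ (Complex.exp (w + Complex.I * t)) :=
  hφ.analyticAt (isOpen_ext.mem_nhds (exp_mem hw t))

lemma uu_smooth {φ : ℂ → ℂ} (hφ : DifferentiableOn ℂ φ {z : ℂ | 1 < ‖z‖})
    (hinj : Set.InjOn φ {z : ℂ | 1 < ‖z‖}) (n : ℕ) :
    ContDiffOn ℝ ∞ (uu φ n) ({z : ℂ | 0 < z.re} ×ˢ Set.univ) := by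
  rintro ⟨w, θ⟩ ⟨hw, -⟩
  apply ContDiffAt.contDiffWithinAt
  have hw' : 0 < w.re := hw
  have base : ∀ j : Fin n, ContDiffAt ℝ ∞ (fun p : ℂ × (Fin n → ℝ) =>
      Complex.exp (p.1 + Complex.I * (p.2 j : ℂ))) (w, θ) := by
    intro j
    have h1 : ContDiff ℝ ∞ (fun p : ℂ × (Fin n → ℝ) => ((p.2 j : ℝ) : ℂ)) :=
      Complex.ofRealCLM.contDiff.comp ((contDiff_apply ℝ ℝ j).comp contDiff_snd)
    exact ((contDiff_fst.add (contDiff_const.mul h1)).cexp).contDiffAt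
  have hf : ∀ j : Fin n, ContDiffAt ℝ ∞ (fun p : ℂ × (Fin n → ℝ) =>
      φ (Complex.exp (p.1 + Complex.I * (p.2 j : ℂ)))) (w, θ) := by
    intro j
    have : ContDiffAt ℝ ∞ φ (Complex.exp (w + Complex.I * (θ j : ℂ))) :=
      ((ana_f hφ hw' (θ j)).contDiffAt).restrict_scalars ℝ
    exact ContDiffAt.comp (w, θ) (f := fun p : ℂ × (Fin n → ℝ) =>
      Complex.exp (p.1 + Complex.I * (p.2 j : ℂ))) this (base j)
  have hg : ∀ j : Fin n, ContDiffAt ℝ ∞ (fun p : ℂ × (Fin n → ℝ) =>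
      deriv φ (Complex.exp (p.1 + Complex.I * (p.2 j : ℂ)))) (w, θ) := by
    intro j
    have : ContDiffAt ℝ ∞ (deriv φ) (Complex.exp (w + Complex.I * (θ j : ℂ))) :=
      ((ana_f hφ hw' (θ j)).deriv.contDiffAt).restrict_scalars ℝ
    exact ContDiffAt.comp (w, θ) (f := fun p : ℂ × (Fin n → ℝ) =>
      Complex.exp (p.1 + Complex.I * (p.2 j : ℂ))) this (base j)
  unfold uu
  refine ContDiffAt.mul (contDiffAt_prod fun q _ => ?_) (contDiffAt_prod fun μ _ => ?_)
  · exact ((hf q.1).sub (hf q.2)).norm_sq ℝ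
  · exact (hg μ).norm ℝ (aux_deriv_ne isOpen_ext hφ hinj (exp_mem hw' (θ μ)))

lemma uu_local {φ : ℂ → ℂ} (hφ : DifferentiableOn ℂ φ {z : ℂ | 1 < ‖z‖})
    (hinj : Set.InjOn φ {z : ℂ | 1 < ‖z‖}) (n : ℕ) {w : ℂ} (hw : 0 < w.re) (θ : Fin n → ℝ) :
    ∃ h : ℂ → ℂ, AnalyticAt ℂ h w ∧ ∀ᶠ z in nhds w, uu φ n (z, θ) = ‖h z‖ ^ 2 := by
  have base : ∀ j : Fin n, AnalyticAt ℂ (fun z : ℂ => Complex.exp (z + Complex.I * (θ j : ℂ))) w :=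
    fun j => (analyticAt_id.add analyticAt_const).cexp
  have hf : ∀ j : Fin n, AnalyticAt ℂ (fun z : ℂ => φ (Complex.exp (z + Complex.I * (θ j : ℂ)))) w :=
    fun j => (ana_f hφ hw (θ j)).comp (f := fun z : ℂ => Complex.exp (z + Complex.I * (θ j : ℂ))) (base j)
  have hg : ∀ j : Fin n, AnalyticAt ℂ (fun z : ℂ => deriv φ (Complex.exp (z + Complex.I * (θ j : ℂ)))) w :=
    fun j => (ana_f hφ hw (θ j)).deriv.comp (f := fun z : ℂ => Complex.exp (z + Complex.I * (θ j : ℂ))) (base j)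
  have hQ : AnalyticAt ℂ (fun z : ℂ => ∏ j : Fin n, deriv φ (Complex.exp (z + Complex.I * (θ j : ℂ)))) w :=
    Finset.analyticAt_fun_prod _ fun j _ => hg j
  have hP : AnalyticAt ℂ (fun z : ℂ => ∏ q ∈ Finset.univ.filter (fun q : Fin n × Fin n => q.1 < q.2),
      (φ (Complex.exp (z + Complex.I * (θ q.1 : ℂ))) - φ (Complex.exp (z + Complex.I * (θ q.2 : ℂ))))) w :=
    Finset.analyticAt_fun_prod _ fun q _ => (hf q.1).sub (hf q.2)
  obtain ⟨r, hr, -, hr2⟩ := aux_root hQ (Finset.prod_ne_zero_iff.2 fun j _ =>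
    aux_deriv_ne isOpen_ext hφ hinj (exp_mem hw (θ j))) 2 two_ne_zero
  refine ⟨_, hP.mul hr, ?_⟩
  filter_upwards [hr2] with z hz
  simp only [uu, Pi.mul_apply, norm_mul, mul_pow, ← norm_pow, hz, norm_prod]
  simp [Finset.prod_pow]

lemma uu_nonneg (φ : ℂ → ℂ) (n : ℕ) (p) : 0 ≤ uu φ n p := by
  unfold uu; positivity

lemma uu_cont {φ : ℂ → ℂ} (hφ : DifferentiableOn ℂ φ {z : ℂ | 1 < ‖z‖})
    (hinj : Set.InjOn φ {z : ℂ | 1 < ‖z‖}) (n : ℕ) {w : ℂ} (hw : 0 < w.re) :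
    Continuous fun θ => uu φ n (w, θ) := by
  rw [← continuousOn_univ]
  exact (uu_smooth hφ hinj n).continuousOn.comp (by fun_prop) (fun θ _ => ⟨hw, trivial⟩)

lemma uu_per (φ : ℂ → ℂ) (n : ℕ) (w : ℂ) (θ θ' : Fin n → ℝ)
    (h : ∀ j, ((θ j : ℝ) : AddCircle (2 * Real.pi)) = (θ' j : ℝ)) :
    uu φ n (w, θ) = uu φ n (w, θ') := by
  have : ∀ j, Complex.exp (w + Complex.I * (θ j : ℂ)) = Complex.exp (w + Complex.I * (θ' j : ℂ)) := by
    intro j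
    obtain ⟨k, hk⟩ := AddCircle.coe_eq_zero_iff _ |>.1 (show ((θ j - θ' j : ℝ) : AddCircle (2 * Real.pi)) = 0 by
      rw [AddCircle.coe_sub, h j, sub_self])
    rw [Complex.exp_eq_exp_iff_exists_int]
    refine ⟨k, ?_⟩
    have : (θ j : ℂ) = θ' j + k * (2 * Real.pi) := by
      have : θ j = θ' j + k * (2 * Real.pi) := by
        rw [zsmul_eq_mul] at hk; linarith
      exact_mod_cast this
    rw [this]; ring
  simp only [uu, this]

abbrev box (n : ℕ) : Set (Fin n → ℝ) := Set.pi Set.univ (fun _ : Fin n => Set.Icc (-Real.pi) Real.pi)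

lemma box_compact (n : ℕ) : IsCompact (box n) := isCompact_univ_pi fun _ => isCompact_Icc

lemma uu_pos {φ : ℂ → ℂ} (hφ : DifferentiableOn ℂ φ {z : ℂ | 1 < ‖z‖})
    (hinj : Set.InjOn φ {z : ℂ | 1 < ‖z‖}) (n : ℕ) {w : ℂ} (hw : 0 < w.re) :
    0 < ∫ θ in box n, uu φ n (w, θ) := by
  have hc := uu_cont hφ hinj n hw
  rw [setIntegral_pos_iff_support_of_nonneg_ae (Eventually.of_forall fun θ => uu_nonneg φ n _)
    (hc.continuousOn.integrableOn_compact (box_compact n))]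
  have hopen : IsOpen (Function.support (fun θ => uu φ n (w, θ)) ∩
      Set.pi Set.univ (fun _ : Fin n => Set.Ioo (-Real.pi) Real.pi)) :=
    hc.isOpen_support.inter (isOpen_set_pi Set.finite_univ fun _ _ => isOpen_Ioo)
  refine lt_of_lt_of_le (hopen.measure_pos volume ?_) (measure_mono
    (Set.inter_subset_inter_right _ (Set.pi_mono fun _ _ => Set.Ioo_subset_Icc_self)))
  have hb : ∀ j : Fin n, 0 ≤ (j : ℝ) / n ∧ (j : ℝ) / n < 1 := by
    intro j
    have hn : (0:ℝ) < n := by exact_mod_cast (Nat.zero_le _).trans_lt j.2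
    refine ⟨by positivity, ?_⟩
    rw [div_lt_one hn]
    exact_mod_cast j.2
  have hpi := Real.pi_gt_three
  refine ⟨fun j => (j : ℝ) / n, ?_, fun j _ => ⟨by linarith [hb j], by linarith [hb j]⟩⟩
  rw [Function.mem_support]
  unfold uu
  refine mul_ne_zero (Finset.prod_ne_zero_iff.2 fun q hq => ?_) (Finset.prod_ne_zero_iff.2 fun j _ => ?_)
  · refine pow_ne_zero 2 (norm_ne_zero_iff.2 (sub_ne_zero.2 fun heq => ?_))
    have h1 := hinj (exp_mem hw _) (exp_mem hw _) heq
    rw [Complex.exp_add, Complex.exp_add] at h1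
    have h2 := mul_left_cancel₀ (Complex.exp_ne_zero w) h1
    have him : ∀ x : ℝ, (Complex.I * (x : ℂ)).im = x := by intro x; simp
    have h3 := Complex.exp_inj_of_neg_pi_lt_of_le_pi (by rw [him]; linarith [hb q.1])
      (by rw [him]; linarith [hb q.1]) (by rw [him]; linarith [hb q.2]) (by rw [him]; linarith [hb q.2]) h2
    have h4 := congrArg Complex.im h3
    rw [him, him] at h4
    have hlt : q.1 < q.2 := (Finset.mem_filter.1 hq).2
    have hn : (0:ℝ) < n := by exact_mod_cast (Nat.zero_le _).trans_lt q.1.2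
    have h5 : (q.1 : ℝ) < q.2 := by exact_mod_cast hlt
    have := (div_lt_div_iff_of_pos_right hn).2 h5
    linarith
  · exact norm_ne_zero_iff.2 (aux_deriv_ne isOpen_ext hφ hinj (exp_mem hw _))

lemma hasDeriv_J {n : ℕ} {u : ℂ × (Fin n → ℝ) → ℝ}
    (hu : ContDiffOn ℝ ∞ u ({z : ℂ | 0 < z.re} ×ˢ Set.univ)) {t : ℝ} (ht : 0 < t) :
    HasDerivAt (fun s : ℝ => ∫ θ in box n, u (s, θ)) (∫ θ in box n, fderiv ℝ u (t, θ) (1, 0)) t := by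
  simpa using aux_param volume (box n) (box_compact n) _ isOpen_half u hu 0 1 t (by simpa using ht)

lemma uu_rot {φ : ℂ → ℂ} (hφ : DifferentiableOn ℂ φ {z : ℂ | 1 < ‖z‖})
    (hinj : Set.InjOn φ {z : ℂ | 1 < ‖z‖}) (n : ℕ) {w : ℂ} (hw : 0 < w.re) (α : ℝ) :
    ∫ θ in box n, uu φ n (w + α * Complex.I, θ) = ∫ θ in box n, uu φ n (w, θ) := by
  rw [← aux_shift (fun θ => uu φ n (w, θ)) (uu_cont hφ hinj n hw) (uu_per φ n w) α]
  congr 1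
  ext θ
  have : ∀ j, w + α * Complex.I + Complex.I * (θ j : ℂ) = w + Complex.I * ((α + θ j : ℝ) : ℂ) := by
    intro j; push_cast; ring
  simp only [uu, this]

lemma uu_rot2 {φ : ℂ → ℂ} (hφ : DifferentiableOn ℂ φ {z : ℂ | 1 < ‖z‖})
    (hinj : Set.InjOn φ {z : ℂ | 1 < ‖z‖}) (n : ℕ) {w : ℂ} (hw : 0 < w.re) :
    ∫ θ in box n, fderiv ℝ (fun p => fderiv ℝ (uu φ n) p (Complex.I, 0)) (w, θ) (Complex.I, 0) = 0 := by
  have hO : IsOpen ({z : ℂ | 0 < z.re} ×ˢ (Set.univ : Set (Fin n → ℝ))) := isOpen_half.prod isOpen_univ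
  have hu := uu_smooth hφ hinj n
  have hu1 := aux_smoothD hO hu Complex.I
  have hre : ∀ s : ℝ, w + s * Complex.I ∈ {z : ℂ | 0 < z.re} := by intro s; simpa using hw
  have h1 : ∀ s : ℝ, ∫ θ in box n, fderiv ℝ (uu φ n) (w + s * Complex.I, θ) (Complex.I, 0) = 0 := by
    intro s
    have d := aux_param volume (box n) (box_compact n) _ isOpen_half _ hu w Complex.I s (hre s)
    simp only [uu_rot hφ hinj n hw] at d
    exact d.unique (hasDerivAt_const _ _)
  have d := aux_param volume (box n) (box_compact n) _ isOpen_half _ hu1 w Complex.I 0 (hre 0)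
  simp only [h1] at d
  simpa using d.unique (hasDerivAt_const _ _)

lemma main_ineq {φ : ℂ → ℂ} (hφ : DifferentiableOn ℂ φ {z : ℂ | 1 < ‖z‖})
    (hinj : Set.InjOn φ {z : ℂ | 1 < ‖z‖}) (n : ℕ) {w : ℂ} (hw : 0 < w.re) (l : ℝ) :
    0 ≤ l ^ 2 * (∫ θ in box n, uu φ n (w, θ)) + 2 * l * (∫ θ in box n, fderiv ℝ (uu φ n) (w, θ) (1, 0))
      + ∫ θ in box n, fderiv ℝ (fun p => fderiv ℝ (uu φ n) p (1, 0)) (w, θ) (1, 0) := by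
  have hO : IsOpen ({z : ℂ | 0 < z.re} ×ˢ (Set.univ : Set (Fin n → ℝ))) := isOpen_half.prod isOpen_univ
  have hu := uu_smooth hφ hinj n
  have hint : ∀ u : ℂ × (Fin n → ℝ) → ℝ, ContDiffOn ℝ ∞ u ({z : ℂ | 0 < z.re} ×ˢ Set.univ) →
      IntegrableOn (fun θ => u (w, θ)) (box n) := by
    intro u hu
    have : Continuous fun θ => u (w, θ) := by
      rw [← continuousOn_univ]
      exact hu.continuousOn.comp (by fun_prop) (fun θ _ => ⟨hw, trivial⟩)
    exact this.continuousOn.integrableOn_compact (box_compact n)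
  have i0 := hint _ hu
  have i1 := hint _ (aux_smoothD hO hu 1)
  have i2 := hint _ (aux_smoothD hO (aux_smoothD hO hu 1) 1)
  have i3 := hint _ (aux_smoothD hO (aux_smoothD hO hu Complex.I) Complex.I)
  have key : 0 ≤ ∫ θ in box n, (l ^ 2 * uu φ n (w, θ) + 2 * l * fderiv ℝ (uu φ n) (w, θ) (1, 0)
      + (fderiv ℝ (fun p => fderiv ℝ (uu φ n) p (1, 0)) (w, θ) (1, 0)
      + fderiv ℝ (fun p => fderiv ℝ (uu φ n) p (Complex.I, 0)) (w, θ) (Complex.I, 0))) := by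
    refine integral_nonneg fun θ => ?_
    obtain ⟨h, hh, huh⟩ := uu_local hφ hinj n hw θ
    exact aux_point isOpen_half hu hw θ hh huh l
  have gen : ∀ a b c d : (Fin n → ℝ) → ℝ, IntegrableOn a (box n) → IntegrableOn b (box n) →
      IntegrableOn c (box n) → IntegrableOn d (box n) →
      ∫ θ in box n, (l ^ 2 * a θ + 2 * l * b θ + (c θ + d θ)) =
      l ^ 2 * (∫ θ in box n, a θ) + 2 * l * (∫ θ in box n, b θ)
        + ((∫ θ in box n, c θ) + ∫ θ in box n, d θ) := by
    intro a b c d ha hb hc hd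
    rw [integral_add, integral_add, integral_add, integral_const_mul, integral_const_mul]
    · exact hc
    · exact hd
    · exact ha.const_mul _
    · exact hb.const_mul _
    · exact (ha.const_mul _).add (hb.const_mul _)
    · exact hc.add hd
  rw [gen _ _ _ _ i0 i1 i2 i3, uu_rot2 hφ hinj n hw, add_zero] at key
  exact key

lemma Zn_eq (φ : ℂ → ℂ) (n : ℕ) {r : ℝ} (hr : 1 < r) :
    Zn φ n r = (1 / (n.factorial * r ^ (n * (n - 1)))) *
      ∫ θ in box n, uu φ n ((Real.log r : ℝ), θ) := by
  have : ∀ t : ℝ, Complex.exp ((Real.log r : ℝ) + Complex.I * (t : ℂ)) =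
      (r : ℂ) * Complex.exp (Complex.I * (t : ℂ)) := by
    intro t
    rw [Complex.exp_add, ← Complex.ofReal_exp, Real.exp_log (by linarith)]
  simp only [Zn, uu, this]

/-- For a univalent `φ` on the exterior disk with hydrodynamic
normalization, `E_n` is twice continuously differentiable on `(1, ∞)` and satisfies
`r E_n''(r) + E_n'(r) ≥ 0` for all `r > 1`. -/
theorem stmt11 (φ : ℂ → ℂ) (φ₀ : ℂ) (c : ℕ → ℂ)
    (hφ : DifferentiableOn ℂ φ {z : ℂ | 1 < ‖z‖})
    (hinj : Set.InjOn φ {z : ℂ | 1 < ‖z‖})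
    (hLaurent : ∀ z : ℂ, 1 < ‖z‖ →
      Summable (fun k : ℕ => ‖c k * z ^ (-(k : ℤ) - 1)‖) ∧
      φ z = z + φ₀ + ∑' k : ℕ, c k * z ^ (-(k : ℤ) - 1))
    (n : ℕ) (hn : 1 ≤ n) :
    ContDiffOn ℝ 2 (En φ n) (Set.Ioi 1) ∧
    ∀ r : ℝ, 1 < r → 0 ≤ r * deriv (deriv (En φ n)) r + deriv (En φ n) r := by
  have hO : IsOpen ({z : ℂ | 0 < z.re} ×ˢ (Set.univ : Set (Fin n → ℝ))) := isOpen_half.prod isOpen_univ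
  have hu := uu_smooth hφ hinj n
  have hu1 := aux_smoothD hO hu 1
  have hu2 := aux_smoothD hO hu1 1
  have hF := fun (t : ℝ) (ht : 0 < t) => hasDeriv_J hu ht
  have hF1 := fun (t : ℝ) (ht : 0 < t) => hasDeriv_J hu1 ht
  have hF2 := fun (t : ℝ) (ht : 0 < t) => hasDeriv_J hu2 ht
  have hpos : ∀ t : ℝ, 0 < t → 0 < ∫ θ in box n, uu φ n ((t : ℂ), θ) :=
    fun t ht => uu_pos hφ hinj n (by simpa using ht)
  have hineq := fun (t : ℝ) (ht : 0 < t) (l : ℝ) =>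
    main_ineq hφ hinj n (w := (t : ℂ)) (by simpa using ht) l
  set F : ℝ → ℝ := fun t => ∫ θ in box n, uu φ n ((t : ℂ), θ) with hFdef
  set F1 : ℝ → ℝ := fun t => ∫ θ in box n, fderiv ℝ (uu φ n) ((t : ℂ), θ) (1, 0) with hF1def
  set F2 : ℝ → ℝ := fun t => ∫ θ in box n,
    fderiv ℝ (fun p => fderiv ℝ (uu φ n) p (1, 0)) ((t : ℂ), θ) (1, 0) with hF2def
  replace hF : ∀ t : ℝ, 0 < t → HasDerivAt F (F1 t) t := hF
  replace hF1 : ∀ t : ℝ, 0 < t → HasDerivAt F1 (F2 t) t := hF1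
  replace hF2 : ∀ t : ℝ, 0 < t → ContinuousAt F2 t := fun t ht => (hF2 t ht).continuousAt
  replace hpos : ∀ t : ℝ, 0 < t → 0 < F t := hpos
  replace hineq : ∀ t : ℝ, 0 < t → ∀ l : ℝ, 0 ≤ l ^ 2 * F t + 2 * l * F1 t + F2 t := hineq
  have hZ : ∀ r : ℝ, 1 < r → Zn φ n r = (1 / (n.factorial * r ^ (n * (n - 1)))) * F (Real.log r) :=
    fun r hr => Zn_eq φ n hr
  clear_value F F1 F2
  clear hFdef hF1def hF2def hu hu1 hu2 hO hLaurent
  set m := n * (n - 1)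
  have hlog : ∀ r : ℝ, 1 < r → 0 < Real.log r := fun r hr => Real.log_pos hr
  have hE : ∀ r : ℝ, 1 < r → En φ n r =
      Real.log (1 / (n.factorial * (2 * Real.pi) ^ n)) - m * Real.log r + Real.log (F (Real.log r)) := by
    intro r hr
    have hr0 : 0 < r := by linarith
    have hf : (0:ℝ) < n.factorial := by exact_mod_cast n.factorial_pos
    have hp := Real.pi_pos
    have hFp := hpos _ (hlog r hr)
    rw [En, hZ r hr, ← Real.log_pow, ← Real.log_div (by positivity) (by positivity),
      ← Real.log_mul (by positivity) (by positivity)]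
    congr 1
    field_simp
  have hE1 : ∀ r : ℝ, 1 < r → HasDerivAt (En φ n)
      ((- m + F1 (Real.log r) / F (Real.log r)) * r⁻¹) r := by
    intro r hr
    have hr0 : r ≠ 0 := by linarith
    have d1 := Real.hasDerivAt_log hr0
    have d2 := (hF _ (hlog r hr)).comp r d1
    have d3 := d2.log (hpos _ (hlog r hr)).ne'
    have d4 := ((d1.const_mul (m:ℝ)).const_sub (Real.log (1 / (n.factorial * (2 * Real.pi) ^ n)))).add d3
    refine (d4.congr_of_eventuallyEq ?_).congr_deriv ?_
    · filter_upwards [lt_mem_nhds hr] with s hs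
      rw [hE s hs]; rfl
    · simp only [Function.comp_apply]
      ring
  have hE2 : ∀ r : ℝ, 1 < r → HasDerivAt (deriv (En φ n))
      ((F2 (Real.log r) * F (Real.log r) - F1 (Real.log r) ^ 2) / F (Real.log r) ^ 2 * r⁻¹ * r⁻¹
        + (- m + F1 (Real.log r) / F (Real.log r)) * (-(r ^ 2)⁻¹)) r := by
    intro r hr
    have hr0 : r ≠ 0 := by linarith
    have d1 := Real.hasDerivAt_log hr0
    have d2 := (hF _ (hlog r hr)).comp r d1
    have d3 := (hF1 _ (hlog r hr)).comp r d1
    have d4 := ((d3.div d2 (hpos _ (hlog r hr)).ne').const_add (-(m:ℝ))).mul (hasDerivAt_inv hr0)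
    refine (d4.congr_of_eventuallyEq ?_).congr_deriv ?_
    · filter_upwards [lt_mem_nhds hr] with s hs
      rw [(hE1 s hs).deriv]; rfl
    · simp only [Function.comp_apply, Pi.div_apply]
      ring
  have hpw : ∀ r : ℝ, 1 < r → 0 ≤ F2 (Real.log r) * F (Real.log r) - F1 (Real.log r) ^ 2 := by
    intro r hr
    have hp := hpos _ (hlog r hr)
    have h := hineq _ (hlog r hr) (-(F1 (Real.log r) / F (Real.log r)))
    have h2 := mul_nonneg h hp.le
    have : ((-(F1 (Real.log r) / F (Real.log r))) ^ 2 * F (Real.log r) + 2 * (-(F1 (Real.log r) / F (Real.log r))) * F1 (Real.log r) + F2 (Real.log r)) * F (Real.log r) = F2 (Real.log r) * F (Real.log r) - F1 (Real.log r) ^ 2 := by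
      field_simp
      ring
    rwa [this] at h2
  constructor
  · rw [show (2 : WithTop ℕ∞) = 1 + 1 from (one_add_one_eq_two).symm,
      contDiffOn_succ_iff_deriv_of_isOpen isOpen_Ioi]
    refine ⟨fun r hr => (hE1 r hr).differentiableAt.differentiableWithinAt, by simp, ?_⟩
    rw [show (1 : WithTop ℕ∞) = 0 + 1 from (zero_add _).symm,
      contDiffOn_succ_iff_deriv_of_isOpen isOpen_Ioi]
    refine ⟨fun r hr => (hE2 r hr).differentiableAt.differentiableWithinAt, by simp, ?_⟩
    rw [contDiffOn_zero]
    refine ContinuousOn.congr ?_ (fun r hr => (hE2 r hr).deriv)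
    intro r hr
    apply ContinuousAt.continuousWithinAt
    have hr' : 1 < r := hr
    have hr0 : r ≠ 0 := by linarith
    have cl := Real.continuousAt_log hr0
    have c0 : ContinuousAt (fun r => F (Real.log r)) r :=
      ContinuousAt.comp (f := Real.log) (hF _ (hlog r hr')).continuousAt cl
    have c1 : ContinuousAt (fun r => F1 (Real.log r)) r :=
      ContinuousAt.comp (f := Real.log) (hF1 _ (hlog r hr')).continuousAt cl
    have c2 : ContinuousAt (fun r => F2 (Real.log r)) r :=
      ContinuousAt.comp (f := Real.log) (hF2 _ (hlog r hr')) cl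
    have hp := (hpos _ (hlog r hr')).ne'
    have ci : ContinuousAt (fun r : ℝ => r⁻¹) r := continuousAt_inv₀ hr0
    have ci2 : ContinuousAt (fun r : ℝ => (r ^ 2)⁻¹) r :=
      (continuousAt_id.pow 2).inv₀ (pow_ne_zero 2 hr0)
    exact (((((c2.mul c0).sub (c1.pow 2)).div (c0.pow 2) (pow_ne_zero 2 hp)).mul ci).mul ci).add
      ((continuousAt_const.add (c1.div c0 hp)).mul ci2.neg)
  · intro r hr
    rw [(hE1 r hr).deriv, (hE2 r hr).deriv]
    have hr0 : 0 < r := by linarith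
    have hp := hpos _ (hlog r hr)
    have : r * ((F2 (Real.log r) * F (Real.log r) - F1 (Real.log r) ^ 2) / F (Real.log r) ^ 2 * r⁻¹ * r⁻¹
        + (- m + F1 (Real.log r) / F (Real.log r)) * (-(r ^ 2)⁻¹)) +
        (- m + F1 (Real.log r) / F (Real.log r)) * r⁻¹ =
        (F2 (Real.log r) * F (Real.log r) - F1 (Real.log r) ^ 2) / F (Real.log r) ^ 2 * r⁻¹ := by
      field_simp
      ring
    rw [this]
    exact mul_nonneg (div_nonneg (hpw r hr) (by positivity)) (by positivity)
end

section
/- Let φ be holomorphic and injective on the exterior disk Δ = {z ∈ ℂ : |z| > 1}, with Laurent expansion φ(z) = z + φ₀ + ∑_{k≥1} φ_{-k} z^{-k} at infinity, and let n ≥ 1. Then E_n(r) → 0 as r → ∞. -/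
open MeasureTheory Filter

lemma aux_card (n : ℕ) :
    2 * (Finset.univ.filter (fun p : Fin n × Fin n => p.1 < p.2)).card = n * (n - 1) := by
  have h : (Finset.univ.filter (fun p : Fin n × Fin n => p.1 < p.2)).card
      = ∑ i : Fin n, (Finset.Ioi i).card := by
    rw [Finset.card_filter, Fintype.sum_prod_type]
    refine Finset.sum_congr rfl fun i _ => ?_
    rw [← Finset.card_filter]
    congr 1
    ext j
    simp
  rw [h]
  simp only [Fin.card_Ioi]
  rw [Fin.sum_univ_eq_sum_range (fun i => n - 1 - i) n, Finset.sum_range_reflect (fun i => i) n,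
    mul_comm, Finset.sum_range_id_mul_two]

lemma aux_prod_filter (n : ℕ) (f : Fin n → Fin n → ℝ) :
    ∏ p ∈ Finset.univ.filter (fun p : Fin n × Fin n => p.1 < p.2), f p.1 p.2
      = ∏ i : Fin n, ∏ j ∈ Finset.Ioi i, f i j := by
  rw [Finset.prod_filter, Fintype.prod_prod_type]
  refine Finset.prod_congr rfl fun i _ => ?_
  rw [← Finset.prod_filter]
  congr 1
  ext j
  simp

/-- exponential notation -/
noncomputable def eC (t : ℝ) : ℂ := Complex.exp (Complex.I * (t : ℂ))

lemma eC_norm (t : ℝ) : ‖eC t‖ = 1 := by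
  unfold eC; rw [mul_comm]; exact Complex.norm_exp_ofReal_mul_I t

lemma eC_cont : Continuous eC := by unfold eC; fun_prop

lemma aux_sq (n : ℕ) (θ : Fin n → ℝ) :
    ((∏ p ∈ Finset.univ.filter (fun p : Fin n × Fin n => p.1 < p.2),
      ‖eC (θ p.1) - eC (θ p.2)‖ ^ 2 : ℝ) : ℂ)
    = ∑ σ : Equiv.Perm (Fin n), ∑ τ : Equiv.Perm (Fin n),
        ((Equiv.Perm.sign σ : ℤ) : ℂ) * ((Equiv.Perm.sign τ : ℤ) : ℂ) *
        ∏ i, (eC (θ i) ^ (σ i : ℕ) * (starRingEnd ℂ) (eC (θ i)) ^ (τ i : ℕ)) := by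
  have h1 : ∏ p ∈ Finset.univ.filter (fun p : Fin n × Fin n => p.1 < p.2),
      ‖eC (θ p.1) - eC (θ p.2)‖ ^ 2 = ‖(Matrix.vandermonde (fun i => eC (θ i))).det‖ ^ 2 := by
    rw [aux_prod_filter n (fun i j => ‖eC (θ i) - eC (θ j)‖ ^ 2), Matrix.det_vandermonde]
    simp only [norm_prod, Finset.prod_pow]
    congr 1
    refine Finset.prod_congr rfl fun i _ => Finset.prod_congr rfl fun j _ => ?_
    exact norm_sub_rev _ _
  have h2 : (Matrix.vandermonde (fun i => eC (θ i))).det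
      = ∑ σ : Equiv.Perm (Fin n), ((Equiv.Perm.sign σ : ℤ) : ℂ) * ∏ i, eC (θ i) ^ (σ i : ℕ) := by
    rw [← Matrix.det_transpose, Matrix.det_apply']
    simp [Matrix.vandermonde_apply]
  rw [h1, Complex.ofReal_pow, ← Complex.mul_conj', h2, map_sum, Finset.sum_mul_sum]
  refine Finset.sum_congr rfl fun σ _ => Finset.sum_congr rfl fun τ _ => ?_
  simp only [map_mul, map_prod, map_pow, Finset.prod_mul_distrib, map_intCast]
  ring

lemma aux_int1 (a b : ℕ) :
    ∫ t in Set.Icc (-Real.pi) Real.pi, eC t ^ a * (starRingEnd ℂ) (eC t) ^ b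
      = if a = b then ((2 * Real.pi : ℝ) : ℂ) else 0 := by
  rw [integral_Icc_eq_integral_Ioc, ← intervalIntegral.integral_of_le (by linarith [Real.pi_pos])]
  have h : ∀ t : ℝ, eC t ^ a * (starRingEnd ℂ) (eC t) ^ b
      = Complex.exp (((a : ℂ) - b) * Complex.I * t) := by
    intro t
    unfold eC
    rw [← Complex.exp_conj, ← Complex.exp_nat_mul, ← Complex.exp_nat_mul, ← Complex.exp_add]
    congr 1
    simp
    ring
  simp only [h]
  split_ifs with hab
  · subst hab
    simp
    ring
  · have hne : ((a : ℂ) - b) * Complex.I ≠ 0 := by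
      refine mul_ne_zero (sub_ne_zero.2 (by exact_mod_cast hab)) Complex.I_ne_zero
    rw [integral_exp_mul_complex hne]
    have : Complex.exp (((a : ℂ) - b) * Complex.I * (Real.pi : ℝ))
        = Complex.exp (((a : ℂ) - b) * Complex.I * ((-Real.pi : ℝ) : ℂ)) := by
      rw [Complex.exp_eq_exp_iff_exists_int]
      refine ⟨(a : ℤ) - b, ?_⟩
      push_cast
      ring
    rw [this, sub_self, zero_div]

lemma aux_int (n : ℕ) :
    ∫ θ in Set.pi Set.univ (fun _ : Fin n => Set.Icc (-Real.pi) Real.pi),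
      ∏ p ∈ Finset.univ.filter (fun p : Fin n × Fin n => p.1 < p.2),
        ‖eC (θ p.1) - eC (θ p.2)‖ ^ 2 = n.factorial * (2 * Real.pi) ^ n := by
  have hc : IsCompact (Set.pi Set.univ (fun _ : Fin n => Set.Icc (-Real.pi) Real.pi)) :=
    isCompact_univ_pi fun _ => isCompact_Icc
  have key : ∀ σ τ : Equiv.Perm (Fin n),
      ∫ θ in Set.pi Set.univ (fun _ : Fin n => Set.Icc (-Real.pi) Real.pi),
        ((Equiv.Perm.sign σ : ℤ) : ℂ) * ((Equiv.Perm.sign τ : ℤ) : ℂ) *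
        ∏ i, (eC (θ i) ^ (σ i : ℕ) * (starRingEnd ℂ) (eC (θ i)) ^ (τ i : ℕ))
      = if σ = τ then (((2 * Real.pi : ℝ) : ℂ)) ^ n else 0 := by
    intro σ τ
    rw [integral_const_mul, volume_pi, Measure.restrict_pi_pi]
    rw [integral_fintype_prod_eq_prod (𝕜 := ℂ)
      (f := fun i t => eC t ^ (σ i : ℕ) * (starRingEnd ℂ) (eC t) ^ (τ i : ℕ))]
    simp only [aux_int1]
    split_ifs with h
    · subst h
      simp only [if_true, Finset.prod_const, Finset.card_univ, Fintype.card_fin]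
      rcases Int.units_eq_one_or (Equiv.Perm.sign σ) with h | h <;> simp [h]
    · obtain ⟨i, hi⟩ : ∃ i, σ i ≠ τ i := by
        by_contra! hh
        exact h (Equiv.ext hh)
      rw [Finset.prod_eq_zero (Finset.mem_univ i), mul_zero]
      rw [if_neg]
      exact fun hh => hi (Fin.ext hh)
  have hcont : ∀ σ τ : Equiv.Perm (Fin n), IntegrableOn (fun θ : Fin n → ℝ =>
        ((Equiv.Perm.sign σ : ℤ) : ℂ) * ((Equiv.Perm.sign τ : ℤ) : ℂ) *
        ∏ i, (eC (θ i) ^ (σ i : ℕ) * (starRingEnd ℂ) (eC (θ i)) ^ (τ i : ℕ)))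
      (Set.pi Set.univ (fun _ : Fin n => Set.Icc (-Real.pi) Real.pi)) := by
    intro σ τ
    refine ContinuousOn.integrableOn_compact hc (Continuous.continuousOn ?_)
    have := eC_cont
    have h2 : Continuous (fun z : ℂ => (starRingEnd ℂ) z) := Complex.continuous_conj
    refine continuous_const.mul (continuous_finsetProd _ fun i _ => ?_)
    exact ((this.comp (continuous_apply i)).pow _).mul
      ((h2.comp (this.comp (continuous_apply i))).pow _)
  apply Complex.ofReal_injective
  rw [← integral_complex_ofReal]
  simp only [aux_sq]
  rw [integral_finsetSum _ (fun σ _ => integrable_finsetSum _ fun τ _ => hcont σ τ)]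
  simp_rw [fun σ : Equiv.Perm (Fin n) => integral_finsetSum Finset.univ (fun τ _ => hcont σ τ), key]
  simp [Fintype.card_perm]

/-- For a univalent `φ` on the exterior disk with hydrodynamic
normalization, `E_n(r) → 0` as `r → ∞`. -/
theorem stmt12 (φ : ℂ → ℂ) (φ₀ : ℂ) (c : ℕ → ℂ)
    (hφ : DifferentiableOn ℂ φ {z : ℂ | 1 < ‖z‖})
    (hinj : Set.InjOn φ {z : ℂ | 1 < ‖z‖})
    (hLaurent : ∀ z : ℂ, 1 < ‖z‖ →
      Summable (fun k : ℕ => ‖c k * z ^ (-(k : ℤ) - 1)‖) ∧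
      φ z = z + φ₀ + ∑' k : ℕ, c k * z ^ (-(k : ℤ) - 1))
    (n : ℕ) (hn : 1 ≤ n) :
    Tendsto (En φ n) atTop (nhds 0) := by
  have hopen : IsOpen {z : ℂ | 1 < ‖z‖} := isOpen_lt continuous_const continuous_norm
  -- uniform bound
  obtain ⟨M, hM0, hM⟩ : ∃ M : ℝ, 0 < M ∧ ∀ z : ℂ, 2 ≤ ‖z‖ → ‖φ z - z‖ ≤ M := by
    have hs := (hLaurent 2 (by norm_num)).1
    have hnn : 0 ≤ ∑' k : ℕ, ‖c k * (2 : ℂ) ^ (-(k : ℤ) - 1)‖ := tsum_nonneg fun _ => norm_nonneg _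
    refine ⟨‖φ₀‖ + ∑' k : ℕ, ‖c k * (2 : ℂ) ^ (-(k : ℤ) - 1)‖ + 1,
      by have := norm_nonneg φ₀; linarith, fun z hz => ?_⟩
    obtain ⟨hsz, he⟩ := hLaurent z (by linarith)
    have h1 : φ z - z = φ₀ + ∑' k : ℕ, c k * z ^ (-(k : ℤ) - 1) := by rw [he]; ring
    rw [h1]
    have h2 : ‖∑' k : ℕ, c k * z ^ (-(k : ℤ) - 1)‖
        ≤ ∑' k : ℕ, ‖c k * (2 : ℂ) ^ (-(k : ℤ) - 1)‖ := by
      refine (norm_tsum_le_tsum_norm hsz).trans (hsz.tsum_le_tsum (fun k => ?_) hs)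
      rw [norm_mul, norm_mul]
      refine mul_le_mul_of_nonneg_left ?_ (norm_nonneg _)
      have e : (-(k : ℤ) - 1) = -((k + 1 : ℕ) : ℤ) := by push_cast; ring
      rw [e, zpow_neg, zpow_neg, zpow_natCast, zpow_natCast, norm_inv, norm_inv, norm_pow, norm_pow]
      have : ‖(2 : ℂ)‖ = 2 := by norm_num
      rw [this]
      gcongr
    have := norm_add_le φ₀ (∑' k : ℕ, c k * z ^ (-(k : ℤ) - 1))
    linarith
  -- derivative bound
  have hD : ∀ z : ℂ, 4 ≤ ‖z‖ → ‖deriv φ z - 1‖ ≤ M / (‖z‖ / 2) := by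
    intro z hz
    have hR : 0 < ‖z‖ / 2 := by linarith
    have hball : ∀ w ∈ Metric.closedBall z (‖z‖ / 2), 2 ≤ ‖w‖ := by
      intro w hw
      rw [Metric.mem_closedBall, dist_eq_norm] at hw
      have := norm_sub_norm_le z w
      rw [norm_sub_rev] at this
      linarith
    have hd : ∀ w, 2 ≤ ‖w‖ → DifferentiableAt ℂ φ w := fun w hw =>
      hφ.differentiableAt (hopen.mem_nhds (show 1 < ‖w‖ by linarith))
    have h := Complex.norm_deriv_le_of_forall_mem_sphere_norm_le (f := fun w => φ w - w) (c := z)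
      (C := M) hR
      (DifferentiableOn.diffContOnCl (fun w hw => by
        have hw' := hball w (Metric.closure_ball_subset_closedBall hw)
        exact ((hd w hw').sub differentiableAt_id).differentiableWithinAt))
      (fun w hw => hM w (hball w (Metric.sphere_subset_closedBall hw)))
    have h' : deriv (fun w => φ w - w) z = deriv φ z - 1 := by
      have := ((hd z (by linarith)).hasDerivAt.sub (hasDerivAt_id z)).deriv
      exact this
    rwa [h'] at h
  have hnorm : ∀ (r t : ℝ), 0 ≤ r → ‖(r : ℂ) * eC t‖ = r := by
    intro r t hr
    rw [norm_mul, eC_norm, mul_one, Complex.norm_real, Real.norm_of_nonneg hr]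
  -- rescaled map
  have hg : ∀ (r t : ℝ), 4 ≤ r → ‖φ ((r : ℂ) * eC t) / r - eC t‖ ≤ M / r := by
    intro r t hr
    have hr0 : (r : ℂ) ≠ 0 := by
      have : r ≠ 0 := by linarith
      exact_mod_cast this
    have : φ ((r : ℂ) * eC t) / r - eC t = (φ ((r : ℂ) * eC t) - r * eC t) / r := by
      field_simp
    rw [this, norm_div, Complex.norm_real, Real.norm_of_nonneg (by linarith)]
    have := hM ((r : ℂ) * eC t) (by rw [hnorm _ _ (by linarith)]; linarith)
    gcongr
  have hd1 : ∀ (r t : ℝ), 4 ≤ r → ‖deriv φ ((r : ℂ) * eC t) - 1‖ ≤ 2 * M / r := by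
    intro r t hr
    have := hD ((r : ℂ) * eC t) (by rw [hnorm _ _ (by linarith)]; linarith)
    rw [hnorm _ _ (by linarith)] at this
    refine this.trans (le_of_eq ?_)
    have : r ≠ 0 := by linarith
    field_simp
  set S := Set.pi Set.univ (fun _ : Fin n => Set.Icc (-Real.pi) Real.pi) with hS
  have hSc : IsCompact S := isCompact_univ_pi fun _ => isCompact_Icc
  set P := Finset.univ.filter (fun p : Fin n × Fin n => p.1 < p.2) with hP
  have hZ : ∀ r : ℝ, 4 ≤ r → Zn φ n r = (1 / (n.factorial : ℝ)) * ∫ θ in S,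
      (∏ p ∈ P, ‖φ ((r : ℂ) * eC (θ p.1)) / r - φ ((r : ℂ) * eC (θ p.2)) / r‖ ^ 2) *
      ∏ μ, ‖deriv φ ((r : ℂ) * eC (θ μ))‖ := by
    intro r hr
    have hr0 : r ≠ 0 := by linarith
    unfold Zn
    rw [one_div, mul_inv, mul_assoc, ← integral_const_mul, one_div]
    congr 1
    refine integral_congr_ae (Eventually.of_forall fun θ => ?_)
    simp only
    rw [← mul_assoc]
    congr 1
    have : ∀ p : Fin n × Fin n, ‖φ ((r : ℂ) * eC (θ p.1)) / r - φ ((r : ℂ) * eC (θ p.2)) / r‖ ^ 2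
        = (r ^ 2)⁻¹ * ‖φ ((r : ℂ) * eC (θ p.1)) - φ ((r : ℂ) * eC (θ p.2))‖ ^ 2 := by
      intro p
      rw [← sub_div, norm_div, Complex.norm_real, div_pow, Real.norm_eq_abs, sq_abs]
      field_simp
    simp only [this]
    rw [Finset.prod_mul_distrib, Finset.prod_const, inv_pow, ← pow_mul, hP, aux_card]
    rfl
  have hlim0 : ∀ C : ℝ, Tendsto (fun r : ℝ => C / r) atTop (nhds 0) := fun C =>
    tendsto_const_nhds.div_atTop tendsto_id
  have tg : ∀ t : ℝ, Tendsto (fun r : ℝ => φ ((r : ℂ) * eC t) / r) atTop (nhds (eC t)) := by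
    intro t
    rw [tendsto_iff_norm_sub_tendsto_zero]
    refine squeeze_zero' (Eventually.of_forall fun _ => norm_nonneg _) ?_ (hlim0 M)
    filter_upwards [eventually_ge_atTop 4] with r hr using hg r t hr
  have td : ∀ t : ℝ, Tendsto (fun r : ℝ => deriv φ ((r : ℂ) * eC t)) atTop (nhds 1) := by
    intro t
    rw [tendsto_iff_norm_sub_tendsto_zero]
    refine squeeze_zero' (Eventually.of_forall fun _ => norm_nonneg _) ?_ (hlim0 (2 * M))
    filter_upwards [eventually_ge_atTop 4] with r hr using hd1 r t hr
  have hmain : Tendsto (fun r : ℝ => ∫ θ in S,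
      (∏ p ∈ P, ‖φ ((r : ℂ) * eC (θ p.1)) / r - φ ((r : ℂ) * eC (θ p.2)) / r‖ ^ 2) *
      ∏ μ, ‖deriv φ ((r : ℂ) * eC (θ μ))‖) atTop
      (nhds (∫ θ in S, ∏ p ∈ P, ‖eC (θ p.1) - eC (θ p.2)‖ ^ 2)) := by
    refine tendsto_integral_filter_of_dominated_convergence
      (fun _ => (∏ p ∈ P, (4 : ℝ) ^ 2) * ∏ μ : Fin n, (2 : ℝ)) ?_ ?_ ?_ ?_
    · filter_upwards [eventually_ge_atTop 4] with r hr
      have hmem : ∀ t : ℝ, (r : ℂ) * eC t ∈ {z : ℂ | 1 < ‖z‖} := fun t => by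
        show 1 < ‖_‖
        rw [hnorm _ _ (by linarith)]; linarith
      have hc0 : Continuous (fun t : ℝ => (r : ℂ) * eC t) := continuous_const.mul eC_cont
      have hc1 : Continuous (fun t : ℝ => φ ((r : ℂ) * eC t)) :=
        hφ.continuousOn.comp_continuous hc0 hmem
      have hc2 : Continuous (fun t : ℝ => deriv φ ((r : ℂ) * eC t)) :=
        (hφ.deriv hopen).continuousOn.comp_continuous hc0 hmem
      refine Continuous.aestronglyMeasurable ?_
      refine (continuous_finsetProd _ fun p _ => ?_).mul (continuous_finsetProd _ fun μ _ => ?_)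
      · exact ((((hc1.comp (continuous_apply p.1)).div_const _).sub
          ((hc1.comp (continuous_apply p.2)).div_const _)).norm).pow 2
      · exact (hc2.comp (continuous_apply μ)).norm
    · filter_upwards [eventually_ge_atTop 4, eventually_ge_atTop (2 * M)] with r hr hrM
      refine Eventually.of_forall fun θ => ?_
      have b1 : ∀ t, ‖φ ((r : ℂ) * eC t) / r‖ ≤ 2 := fun t => by
        have h1 := hg r t hr
        have h2 : M / r ≤ 1 := by rw [div_le_one (by linarith)]; linarith
        have h3 := norm_sub_norm_le (φ ((r : ℂ) * eC t) / r) (eC t)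
        rw [eC_norm] at h3
        linarith
      have b2 : ∀ t, ‖deriv φ ((r : ℂ) * eC t)‖ ≤ 2 := fun t => by
        have h1 := hd1 r t hr
        have h2 : 2 * M / r ≤ 1 := by rw [div_le_one (by linarith)]; linarith
        have h3 := norm_sub_norm_le (deriv φ ((r : ℂ) * eC t)) 1
        rw [norm_one] at h3
        linarith
      rw [Real.norm_of_nonneg (by positivity)]
      refine mul_le_mul (Finset.prod_le_prod (fun _ _ => by positivity) fun p _ => ?_)
        (Finset.prod_le_prod (fun _ _ => by positivity) fun μ _ => b2 _) (by positivity)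
        (by positivity)
      refine pow_le_pow_left₀ (norm_nonneg _) ?_ 2
      have := norm_sub_le (φ ((r : ℂ) * eC (θ p.1)) / r) (φ ((r : ℂ) * eC (θ p.2)) / r)
      linarith [b1 (θ p.1), b1 (θ p.2)]
    · exact integrableOn_const hSc.measure_lt_top.ne
    · refine Eventually.of_forall fun θ => ?_
      have h1 : Tendsto (fun r : ℝ => ∏ p ∈ P,
          ‖φ ((r : ℂ) * eC (θ p.1)) / r - φ ((r : ℂ) * eC (θ p.2)) / r‖ ^ 2) atTop
          (nhds (∏ p ∈ P, ‖eC (θ p.1) - eC (θ p.2)‖ ^ 2)) :=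
        tendsto_finsetProd _ fun p _ => (((tg (θ p.1)).sub (tg (θ p.2))).norm).pow 2
      have h2 : Tendsto (fun r : ℝ => ∏ μ, ‖deriv φ ((r : ℂ) * eC (θ μ))‖) atTop
          (nhds (∏ μ : Fin n, ‖(1 : ℂ)‖)) :=
        tendsto_finsetProd _ fun μ _ => (td (θ μ)).norm
      have h3 := h1.mul h2
      simpa using h3
  rw [hP, hS, aux_int] at hmain
  have hZlim : Tendsto (Zn φ n) atTop (nhds ((2 * Real.pi) ^ n)) := by
    have h := hmain.const_mul (1 / (n.factorial : ℝ))
    have hf : (n.factorial : ℝ) ≠ 0 := by exact_mod_cast n.factorial_ne_zero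
    have e : 1 / (n.factorial : ℝ) * (n.factorial * (2 * Real.pi) ^ n) = (2 * Real.pi) ^ n := by
      field_simp
    rw [e] at h
    refine h.congr' ?_
    filter_upwards [eventually_ge_atTop 4] with r hr using (hZ r hr).symm
  have hpi : (2 * Real.pi) ^ n ≠ 0 := by have := Real.pi_pos; positivity
  have h := hZlim.div_const ((2 * Real.pi) ^ n)
  rw [div_self hpi] at h
  have h' := h.log one_ne_zero
  rw [Real.log_one] at h'
  exact h'
end

section
/- Let φ be holomorphic and injective on the exterior disk Δ = {z ∈ ℂ : |z| > 1}, with Laurent expansion φ(z) = z + φ₀ + ∑_{k≥1} φ_{-k} z^{-k} at infinity. Then for every r > 1 the sequence n ↦ E_n(r) is nondecreasing: E_n(r) ≤ E_{n+1}(r) for all n ≥ 1. -/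
open MeasureTheory Filter

open Polynomial in
/-- The weighted pairing of polynomials along the curve. -/
noncomputable def ipW (f : ℝ → ℂ) (w : ℝ → ℝ) (P Q : ℂ[X]) : ℂ :=
  ∫ θ, P.eval (f θ) * (starRingEnd ℂ) (Q.eval (f θ)) * (w θ : ℂ)
    ∂(volume.restrict (Set.Icc (-Real.pi) Real.pi))

open Polynomial in
lemma ipW_integrable {f : ℝ → ℂ} {w : ℝ → ℝ} (hf : Continuous f) (hw : Continuous w)
    (P Q : ℂ[X]) :
    Integrable (fun θ => P.eval (f θ) * (starRingEnd ℂ) (Q.eval (f θ)) * (w θ : ℂ))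
      (volume.restrict (Set.Icc (-Real.pi) Real.pi)) := by
  have : Continuous (fun θ => P.eval (f θ) * (starRingEnd ℂ) (Q.eval (f θ)) * (w θ : ℂ)) := by
    have h1 : Continuous (fun θ => P.eval (f θ)) := P.continuous.comp hf
    have h2 : Continuous (fun θ => Q.eval (f θ)) := Q.continuous.comp hf
    have h3 := Complex.continuous_conj.comp h2
    exact (h1.mul h3).mul (Complex.continuous_ofReal.comp hw)
  exact this.continuousOn.integrableOn_compact isCompact_Icc

open Polynomial in
lemma ipW_conj (f : ℝ → ℂ) (w : ℝ → ℝ) (P Q : ℂ[X]) :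
    ipW f w P Q = (starRingEnd ℂ) (ipW f w Q P) := by
  unfold ipW
  rw [← integral_conj]
  congr 1
  ext θ
  simp only [map_mul, Complex.conj_conj, Complex.conj_ofReal]
  ring

open Polynomial in
lemma ipW_self (f : ℝ → ℂ) (w : ℝ → ℝ) (P : ℂ[X]) :
    ipW f w P P = ((∫ θ in Set.Icc (-Real.pi) Real.pi, ‖P.eval (f θ)‖ ^ 2 * w θ : ℝ) : ℂ) := by
  unfold ipW
  rw [← integral_complex_ofReal]
  congr 1
  ext θ
  rw [Complex.mul_conj, Complex.normSq_eq_norm_sq]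
  push_cast
  ring

open Polynomial in
lemma ipW_sub_sum {f : ℝ → ℂ} {w : ℝ → ℝ} (hf : Continuous f) (hw : Continuous w)
    (P Q : ℂ[X]) (N : ℕ) (a : ℕ → ℂ) (p : ℕ → ℂ[X]) :
    ipW f w (P - ∑ k ∈ Finset.range N, C (a k) * p k) Q
      = ipW f w P Q - ∑ k ∈ Finset.range N, a k * ipW f w (p k) Q := by
  unfold ipW
  simp_rw [← integral_const_mul]
  rw [← integral_finsetSum _ (fun k _ => (ipW_integrable hf hw (p k) Q).const_mul (a k)),
    ← integral_sub (ipW_integrable hf hw P Q)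
      (integrable_finsetSum _ (fun k _ => (ipW_integrable hf hw (p k) Q).const_mul (a k)))]
  congr 1
  ext θ
  simp only [eval_sub, eval_finsetSum, eval_mul, eval_C, sub_mul, Finset.sum_mul]
  congr 1
  exact Finset.sum_congr rfl (fun k _ => by ring)

open Polynomial in
lemma exists_orth {f : ℝ → ℂ} {w : ℝ → ℝ} (hf : Continuous f) (hw : Continuous w)
    (hpos : ∀ P : ℂ[X], P.Monic → ipW f w P P ≠ 0) (N : ℕ) :
    ∃ p : ℕ → ℂ[X], (∀ k < N, (p k).Monic ∧ (p k).natDegree = k) ∧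
      ∀ j < N, ∀ k < N, j ≠ k → ipW f w (p j) (p k) = 0 := by
  induction N with
  | zero => exact ⟨fun _ => 0, by simp, by simp⟩
  | succ N ih =>
    obtain ⟨p, hp, ho⟩ := ih
    set S : ℂ[X] := ∑ k ∈ Finset.range N,
      C (ipW f w (X ^ N) (p k) / ipW f w (p k) (p k)) * p k with hS
    have hSdeg : S.degree < (X ^ N : ℂ[X]).degree := by
      rw [degree_X_pow]
      refine (degree_sum_le _ _).trans_lt ?_
      rw [Finset.sup_lt_iff (by exact WithBot.bot_lt_coe N)]
      intro k hk
      have hk' := Finset.mem_range.1 hk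
      rw [C_mul']
      refine (degree_smul_le _ _).trans_lt ?_
      rw [degree_eq_natDegree (hp k hk').1.ne_zero, (hp k hk').2]
      exact_mod_cast hk'
    have hq1 : (X ^ N - S).Monic := (monic_X_pow N).sub_of_left hSdeg
    have hq2 : (X ^ N - S).natDegree = N := by
      rw [natDegree_eq_of_degree_eq (degree_sub_eq_left_of_degree_lt hSdeg), natDegree_X_pow]
    have hq3 : ∀ j < N, ipW f w (X ^ N - S) (p j) = 0 := by
      intro j hj
      rw [hS, ipW_sub_sum hf hw (X ^ N) (p j) N
        (fun k => ipW f w (X ^ N) (p k) / ipW f w (p k) (p k)) p,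
        Finset.sum_eq_single j]
      · rw [div_mul_cancel₀ _ (hpos _ (hp j hj).1), sub_self]
      · intro k hk hkj
        rw [ho k (Finset.mem_range.1 hk) j hj hkj, mul_zero]
      · intro h
        exact absurd (Finset.mem_range.2 hj) h
    refine ⟨Function.update p N (X ^ N - S), ?_, ?_⟩
    · intro k hk
      by_cases hkN : k = N
      · subst hkN
        simpa using ⟨hq1, hq2⟩
      · rw [Function.update_of_ne hkN]
        exact hp k (by omega)
    · intro j hj k hk hjk
      by_cases hjN : j = N
      · subst hjN
        rw [Function.update_self, Function.update_of_ne (Ne.symm hjk)]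
        exact hq3 k (by omega)
      · by_cases hkN : k = N
        · subst hkN
          rw [Function.update_self, Function.update_of_ne hjk, ipW_conj, hq3 j (by omega), map_zero]
        · rw [Function.update_of_ne hjN, Function.update_of_ne hkN]
          exact ho j (by omega) k (by omega) hjk

/-- The unnormalized integral. -/
noncomputable def JW (f : ℝ → ℂ) (w : ℝ → ℝ) (n : ℕ) : ℝ :=
  ∫ θ in Set.pi Set.univ (fun _ : Fin n => Set.Icc (-Real.pi) Real.pi),
      (∏ p ∈ Finset.univ.filter (fun p : Fin n × Fin n => p.1 < p.2),
        ‖f (θ p.1) - f (θ p.2)‖ ^ 2) * ∏ μ, w (θ μ)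

open Polynomial in
lemma vand_sq {n : ℕ} (v : Fin n → ℂ) (p : ℕ → ℂ[X])
    (hp : ∀ k < n, (p k).Monic ∧ (p k).natDegree = k) :
    (∏ q ∈ Finset.univ.filter (fun q : Fin n × Fin n => q.1 < q.2), ‖v q.1 - v q.2‖ ^ 2)
      = ‖(Matrix.of (fun i j : Fin n => (p i).eval (v j))).det‖ ^ 2 := by
  have h := Matrix.det_eval_matrixOfPolynomials_eq_det_vandermonde v (fun i : Fin n => p i)
    (fun i => (hp i i.2).2) (fun i => (hp i i.2).1)
  rw [← Matrix.det_transpose]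
  have h2 : (Matrix.of (fun i j : Fin n => (p i).eval (v j))).transpose
      = Matrix.of (fun i j : Fin n => (p j).eval (v i)) := by
    ext i j; rfl
  rw [h2, ← h, Matrix.det_vandermonde, norm_prod, ← Finset.prod_pow, Finset.prod_filter,
    Fintype.prod_prod_type]
  refine Finset.prod_congr rfl (fun i _ => ?_)
  rw [norm_prod, ← Finset.prod_pow, ← Finset.prod_filter]
  refine Finset.prod_congr (by ext j; simp) (fun j _ => ?_)
  rw [norm_sub_rev]

open Polynomial in
lemma JW_eq {f : ℝ → ℂ} {w : ℝ → ℝ} (hf : Continuous f) (hw : Continuous w)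
    {n : ℕ} (p : ℕ → ℂ[X])
    (hp : ∀ k < n, (p k).Monic ∧ (p k).natDegree = k)
    (ho : ∀ j < n, ∀ k < n, j ≠ k → ipW f w (p j) (p k) = 0) :
    (JW f w n : ℂ) = n.factorial * ∏ k ∈ Finset.range n, ipW f w (p k) (p k) := by
  unfold JW
  rw [volume_pi, Measure.restrict_pi_pi, ← integral_complex_ofReal]
  set μ : Measure ℝ := volume.restrict (Set.Icc (-Real.pi) Real.pi) with hμ
  have key : ∀ θ : Fin n → ℝ,
      (((∏ p ∈ Finset.univ.filter (fun p : Fin n × Fin n => p.1 < p.2),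
        ‖f (θ p.1) - f (θ p.2)‖ ^ 2) * ∏ μ, w (θ μ) : ℝ) : ℂ)
      = ∑ σ : Equiv.Perm (Fin n), ∑ τ : Equiv.Perm (Fin n),
        (((Equiv.Perm.sign σ : ℤ) : ℂ) * ((Equiv.Perm.sign τ : ℤ) : ℂ)) *
        ∏ i, ((p (σ i)).eval (f (θ i)) * (starRingEnd ℂ) ((p (τ i)).eval (f (θ i)))
          * (w (θ i) : ℂ)) := by
    intro θ
    rw [vand_sq (fun i => f (θ i)) p hp, Complex.ofReal_mul, ← Complex.normSq_eq_norm_sq,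
      ← Complex.mul_conj, Matrix.det_apply', map_sum, Finset.sum_mul_sum, Finset.sum_mul]
    refine Finset.sum_congr rfl (fun σ _ => ?_)
    rw [Finset.sum_mul]
    refine Finset.sum_congr rfl (fun τ _ => ?_)
    simp only [map_mul, map_prod, Finset.prod_mul_distrib, Matrix.of_apply, Complex.ofReal_prod,
      map_intCast]
    ring
  simp_rw [key]
  have hint : ∀ σ τ : Equiv.Perm (Fin n), Integrable (fun θ : Fin n → ℝ =>
      ∏ i, ((p (σ i)).eval (f (θ i)) * (starRingEnd ℂ) ((p (τ i)).eval (f (θ i)))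
          * (w (θ i) : ℂ))) (Measure.pi (fun _ => μ)) := by
    intro σ τ
    exact Integrable.fintype_prod (f := fun i x => (p (σ i)).eval (f x) *
      (starRingEnd ℂ) ((p (τ i)).eval (f x)) * (w x : ℂ))
      (fun i => ipW_integrable hf hw _ _)
  rw [integral_finsetSum _ (fun σ _ => integrable_finsetSum _
    (fun τ _ => (hint σ τ).const_mul _))]
  have hσ : ∀ σ : Equiv.Perm (Fin n), (∫ θ : Fin n → ℝ, ∑ τ : Equiv.Perm (Fin n),
        (((Equiv.Perm.sign σ : ℤ) : ℂ) * ((Equiv.Perm.sign τ : ℤ) : ℂ)) *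
        ∏ i, ((p (σ i)).eval (f (θ i)) * (starRingEnd ℂ) ((p (τ i)).eval (f (θ i)))
          * (w (θ i) : ℂ)) ∂(Measure.pi (fun _ => μ)))
        = ∏ k ∈ Finset.range n, ipW f w (p k) (p k) := by
    intro σ
    rw [integral_finsetSum _ (fun τ _ => (hint σ τ).const_mul _)]
    have hτ : ∀ τ : Equiv.Perm (Fin n), (∫ θ : Fin n → ℝ,
        (((Equiv.Perm.sign σ : ℤ) : ℂ) * ((Equiv.Perm.sign τ : ℤ) : ℂ)) *
        ∏ i, ((p (σ i)).eval (f (θ i)) * (starRingEnd ℂ) ((p (τ i)).eval (f (θ i)))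
          * (w (θ i) : ℂ)) ∂(Measure.pi (fun _ => μ)))
        = (((Equiv.Perm.sign σ : ℤ) : ℂ) * ((Equiv.Perm.sign τ : ℤ) : ℂ)) *
          ∏ i, ipW f w (p (σ i)) (p (τ i)) := by
      intro τ
      rw [integral_const_mul]
      congr 1
      exact integral_fintype_prod_eq_prod (fun i x => (p (σ i)).eval (f x) *
        (starRingEnd ℂ) ((p (τ i)).eval (f x)) * (w x : ℂ))
    simp_rw [hτ]
    rw [Finset.sum_eq_single σ]
    · have h1 : ((Equiv.Perm.sign σ : ℤ) : ℂ) * ((Equiv.Perm.sign σ : ℤ) : ℂ) = 1 := by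
        rw [← Int.cast_mul]
        rcases Int.units_eq_one_or (Equiv.Perm.sign σ) with h | h <;> simp [h]
      rw [h1, one_mul, Finset.prod_range (fun k => ipW f w (p k) (p k))]
      exact Equiv.prod_comp σ (fun i : Fin n => ipW f w (p i) (p i))
    · intro τ _ hne
      have : ∃ i, σ i ≠ τ i := by
        by_contra h
        push Not at h
        exact hne (Equiv.ext fun i => (h i).symm)
      obtain ⟨i, hi⟩ := this
      rw [Finset.prod_eq_zero (Finset.mem_univ i), mul_zero]
      exact ho _ (σ i).2 _ (τ i).2 (fun h => hi (Fin.ext h))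
    · intro h
      exact absurd (Finset.mem_univ σ) h
  simp_rw [hσ]
  simp [Fintype.card_perm]

open Polynomial in
lemma JW_main {f : ℝ → ℂ} {w : ℝ → ℝ} (hf : Continuous f) (hw : Continuous w)
    {r : ℝ} (hr : 0 < r)
    (hlow : ∀ P : ℂ[X], P.Monic → 2 * Real.pi * r ^ (2 * P.natDegree)
      ≤ ∫ θ in Set.Icc (-Real.pi) Real.pi, ‖P.eval (f θ)‖ ^ 2 * w θ) (n : ℕ) :
    0 < JW f w n ∧ (n + 1) * (2 * Real.pi * r ^ (2 * n)) * JW f w n ≤ JW f w (n + 1) := by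
  have hpos' : ∀ P : ℂ[X], P.Monic →
      0 < ∫ θ in Set.Icc (-Real.pi) Real.pi, ‖P.eval (f θ)‖ ^ 2 * w θ :=
    fun P hP => lt_of_lt_of_le (by positivity) (hlow P hP)
  have hpos : ∀ P : ℂ[X], P.Monic → ipW f w P P ≠ 0 := by
    intro P hP
    rw [ipW_self]
    exact_mod_cast (hpos' P hP).ne'
  obtain ⟨p, hp, ho⟩ := exists_orth hf hw hpos (n + 1)
  have h1 := JW_eq hf hw p hp ho
  have h0 := JW_eq hf hw (n := n) p (fun k hk => hp k (by omega))
    (fun j hj k hk => ho j (by omega) k (by omega))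
  simp_rw [ipW_self] at h1 h0
  have h0' : JW f w n = n.factorial * ∏ k ∈ Finset.range n,
      ∫ θ in Set.Icc (-Real.pi) Real.pi, ‖(p k).eval (f θ)‖ ^ 2 * w θ := by exact_mod_cast h0
  have h1' : JW f w (n + 1) = (n + 1).factorial * ∏ k ∈ Finset.range (n + 1),
      ∫ θ in Set.Icc (-Real.pi) Real.pi, ‖(p k).eval (f θ)‖ ^ 2 * w θ := by exact_mod_cast h1
  have hJ : 0 < JW f w n := by
    rw [h0']
    refine mul_pos (by positivity) (Finset.prod_pos fun k hk => hpos' _ (hp k ?_).1)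
    have := Finset.mem_range.1 hk
    omega
  refine ⟨hJ, ?_⟩
  have hl := hlow (p n) (hp n (by omega)).1
  rw [(hp n (by omega)).2] at hl
  have h2 : JW f w (n + 1) = (n + 1) *
      (∫ θ in Set.Icc (-Real.pi) Real.pi, ‖(p n).eval (f θ)‖ ^ 2 * w θ) * JW f w n := by
    rw [h1', h0', Finset.prod_range_succ, Nat.factorial_succ]
    push_cast
    ring
  rw [h2]
  gcongr

lemma curve_mem {r : ℝ} (hr : 1 < r) (θ : ℝ) :
    (r : ℂ) * Complex.exp (Complex.I * (θ : ℂ)) ∈ {z : ℂ | 1 < ‖z‖} := by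
  have : ‖Complex.exp (Complex.I * (θ : ℂ))‖ = 1 := by
    rw [mul_comm]; exact Complex.norm_exp_ofReal_mul_I θ
  simp [this, abs_of_pos (by linarith : (0:ℝ) < r), hr]

open Polynomial in
lemma low_bound (φ : ℂ → ℂ) (φ₀ : ℂ) (c : ℕ → ℂ)
    (hLaurent : ∀ z : ℂ, 1 < ‖z‖ →
      Summable (fun k : ℕ => ‖c k * z ^ (-(k : ℤ) - 1)‖) ∧
      φ z = z + φ₀ + ∑' k : ℕ, c k * z ^ (-(k : ℤ) - 1))
    {r : ℝ} (hr : 1 < r) (P : ℂ[X]) (hP : P.Monic) :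
    2 * Real.pi * r ^ (2 * P.natDegree)
      ≤ ∫ θ in Set.Icc (-Real.pi) Real.pi,
        ‖P.eval (φ ((r : ℂ) * Complex.exp (Complex.I * (θ : ℂ))))‖ ^ 2 *
          ‖deriv φ ((r : ℂ) * Complex.exp (Complex.I * (θ : ℂ)))‖ := by
  have hr0 : 0 < r := by linarith
  obtain ⟨s, hs1, hsr⟩ := exists_between hr
  have hs0 : 0 < s := by linarith
  -- the function at infinity
  set ψ : ℂ → ℂ := fun u => 1 + φ₀ * u + u ^ 2 * ∑' k : ℕ, c k * u ^ k with hψ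
  have hsum : Summable (fun k : ℕ => ‖c k‖ * s⁻¹ ^ k) := by
    have h := ((hLaurent (s : ℂ) (by simpa [abs_of_pos hs0] using hs1)).1).mul_right s
    refine h.congr (fun k => ?_)
    rw [norm_mul, norm_zpow, Complex.norm_real, Real.norm_of_nonneg hs0.le, mul_assoc]
    congr 1
    rw [zpow_sub₀ hs0.ne', zpow_neg, zpow_natCast, zpow_one, inv_pow]
    field_simp
  set U : Set ℂ := Metric.ball 0 s⁻¹ with hU
  have hUo : IsOpen U := Metric.isOpen_ball
  have hψd : DifferentiableOn ℂ ψ U := by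
    have h1 : DifferentiableOn ℂ (fun u : ℂ => ∑' k : ℕ, c k * u ^ k) U := by
      refine Complex.differentiableOn_tsum_of_summable_norm hsum (fun k => by fun_prop) hUo ?_
      intro k u hu
      have hu' : ‖u‖ < s⁻¹ := by simpa [hU] using hu
      rw [norm_mul, norm_pow]
      gcongr
    fun_prop
  have hφψ : ∀ z : ℂ, 1 < ‖z‖ → φ z = z * ψ z⁻¹ := by
    intro z hz
    have hz0 : z ≠ 0 := by
      rintro rfl
      simp at hz
      linarith
    rw [(hLaurent z hz).2, hψ]
    have : ∀ k : ℕ, c k * z ^ (-(k : ℤ) - 1) = z⁻¹ * (c k * z⁻¹ ^ k) := by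
      intro k
      rw [zpow_sub₀ hz0, zpow_neg, zpow_natCast, zpow_one, inv_pow]
      field_simp
    simp_rw [this, tsum_mul_left]
    field_simp
  have hder : ∀ z : ℂ, s < ‖z‖ → deriv φ z = ψ z⁻¹ - z⁻¹ * deriv ψ z⁻¹ := by
    intro z hz
    have hz0 : z ≠ 0 := by
      rintro rfl
      simp at hz
      linarith
    have hev : φ =ᶠ[nhds z] fun z => z * ψ z⁻¹ := by
      have : {z : ℂ | 1 < ‖z‖} ∈ nhds z :=
        (isOpen_lt continuous_const continuous_norm).mem_nhds (by
          show 1 < ‖z‖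
          linarith)
      filter_upwards [this] with y hy using hφψ y hy
    rw [hev.deriv_eq]
    have hmem : z⁻¹ ∈ U := by
      simp only [hU, mem_ball_zero_iff, norm_inv]
      exact inv_strictAnti₀ hs0 hz
    have h1 : HasDerivAt ψ (deriv ψ z⁻¹) z⁻¹ :=
      (hψd.differentiableAt (hUo.mem_nhds hmem)).hasDerivAt
    have h2 := (hasDerivAt_id z).mul (h1.comp z (hasDerivAt_inv hz0))
    have h3 := h2.deriv
    simp only [id, Function.comp_def] at h3
    refine Eq.trans h3 ?_
    field_simp
    ring
  set n := P.natDegree with hn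
  set Q : ℂ → ℂ := fun u => ∑ k ∈ Finset.range (n + 1), P.coeff k * ψ u ^ k * u ^ (n - k) with hQ
  have hQd : DifferentiableOn ℂ Q U := by
    rw [hQ]
    refine DifferentiableOn.fun_sum (fun k _ => ?_)
    fun_prop
  have hQe : ∀ u : ℂ, u ≠ 0 → Q u = u ^ n * P.eval (u⁻¹ * ψ u) := by
    intro u hu
    rw [eval_eq_sum_range, Finset.mul_sum]
    refine Finset.sum_congr rfl (fun k hk => ?_)
    have hk' : k ≤ n := by
      have := Finset.mem_range.1 hk
      omega
    have : u ^ n = u ^ (n - k) * u ^ k := by rw [← pow_add]; congr 1; omega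
    rw [this, mul_pow, inv_pow]
    field_simp
  set g : ℂ → ℂ := fun u => Q u ^ 2 * (ψ u - u * deriv ψ u) with hg
  have hgd : DifferentiableOn ℂ g U := by
    have := hψd.deriv hUo
    rw [hg]
    fun_prop
  have hψ0 : ψ 0 = 1 := by simp [hψ]
  have hg0 : g 0 = 1 := by
    have : Q 0 = 1 := by
      simp only [hQ]
      rw [Finset.sum_range_succ, Finset.sum_eq_zero]
      · simp [hψ0, hn, hP.coeff_natDegree]
      · intro k hk
        have := Finset.mem_range.1 hk
        rw [zero_pow (by omega), mul_zero]
    simp [hg, this, hψ0]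
  have hmean : Real.circleAverage g 0 r⁻¹ = 1 := by
    rw [DiffContOnCl.circleAverage, hg0]
    rw [abs_of_pos (by positivity)]
    refine (hgd.mono ?_).diffContOnCl
    rw [closure_ball _ (by positivity)]
    exact Metric.closedBall_subset_ball (inv_strictAnti₀ hs0 hsr)
  have hI : ‖∫ θ in (0:ℝ)..2 * Real.pi, g (circleMap 0 r⁻¹ θ)‖ = 2 * Real.pi := by
    rw [Real.circleAverage_def] at hmean
    have : (∫ θ in (0:ℝ)..2 * Real.pi, g (circleMap 0 r⁻¹ θ)) = (2 * Real.pi : ℝ) • (1 : ℂ) := by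
      rw [← hmean, smul_inv_smul₀ (by positivity)]
    rw [this, norm_smul]
    simp [abs_of_pos Real.pi_pos]
  have hper : (∫ θ in (0:ℝ)..2 * Real.pi, g (circleMap 0 r⁻¹ θ))
      = ∫ θ in (-Real.pi)..Real.pi, g (circleMap 0 r⁻¹ (-θ)) := by
    have hp : Function.Periodic (fun θ => g (circleMap 0 r⁻¹ θ)) (2 * Real.pi) :=
      fun x => by simp [periodic_circleMap 0 r⁻¹ x]
    have h := hp.intervalIntegral_add_eq 0 (-Real.pi)
    rw [zero_add, show -Real.pi + 2 * Real.pi = Real.pi by ring] at h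
    rw [h, intervalIntegral.integral_comp_neg (fun θ => g (circleMap 0 r⁻¹ θ)), neg_neg]
  have hpt : ∀ θ : ℝ, ‖g (circleMap 0 r⁻¹ (-θ))‖ = (r ^ (2 * n))⁻¹ *
      (‖P.eval (φ ((r : ℂ) * Complex.exp (Complex.I * (θ : ℂ))))‖ ^ 2 *
          ‖deriv φ ((r : ℂ) * Complex.exp (Complex.I * (θ : ℂ)))‖) := by
    intro θ
    set z : ℂ := (r : ℂ) * Complex.exp (Complex.I * (θ : ℂ)) with hz
    have hcm : circleMap 0 r⁻¹ (-θ) = z⁻¹ := by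
      rw [hz, circleMap, mul_inv, ← Complex.exp_neg]
      push_cast
      rw [zero_add]
      congr 2
      ring
    have hzn : ‖z‖ = r := by
      have : ‖Complex.exp (Complex.I * (θ : ℂ))‖ = 1 := by
        rw [mul_comm]; exact Complex.norm_exp_ofReal_mul_I θ
      rw [hz, norm_mul, this, mul_one, Complex.norm_real, Real.norm_of_nonneg hr0.le]
    have hz0 : z ≠ 0 := by
      rw [← norm_ne_zero_iff, hzn]
      exact hr0.ne'
    rw [hcm, hder z (by rw [hzn]; exact hsr), hφψ z (by rw [hzn]; exact hr), hg]
    simp only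
    rw [hQe _ (inv_ne_zero hz0), inv_inv, norm_mul, norm_pow, norm_mul, norm_pow, norm_inv, hzn,
      mul_pow, ← pow_mul, inv_pow, mul_comm n 2]
    ring
  have hle := intervalIntegral.norm_integral_le_integral_norm (μ := volume)
    (f := fun θ => g (circleMap 0 r⁻¹ (-θ))) (show -Real.pi ≤ Real.pi by linarith [Real.pi_pos])
  rw [← hper, hI] at hle
  simp_rw [hpt] at hle
  rw [intervalIntegral.integral_const_mul,
    intervalIntegral.integral_of_le (by linarith [Real.pi_pos]),
    ← integral_Icc_eq_integral_Ioc] at hle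
  have hrn : 0 < r ^ (2 * n) := by positivity
  rw [le_inv_mul_iff₀ hrn] at hle
  linarith

/-- For a univalent `φ` on the exterior disk with hydrodynamic
normalization and every `r > 1`, the sequence `n ↦ E_n(r)` is nondecreasing. -/
theorem stmt14 (φ : ℂ → ℂ) (φ₀ : ℂ) (c : ℕ → ℂ)
    (hφ : DifferentiableOn ℂ φ {z : ℂ | 1 < ‖z‖})
    (hinj : Set.InjOn φ {z : ℂ | 1 < ‖z‖})
    (hLaurent : ∀ z : ℂ, 1 < ‖z‖ →
      Summable (fun k : ℕ => ‖c k * z ^ (-(k : ℤ) - 1)‖) ∧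
      φ z = z + φ₀ + ∑' k : ℕ, c k * z ^ (-(k : ℤ) - 1)) :
    ∀ r : ℝ, 1 < r → ∀ n : ℕ, 1 ≤ n → En φ n r ≤ En φ (n + 1) r := by
  intro r hr n hn
  have hr0 : 0 < r := by linarith
  have hcurve : Continuous (fun θ : ℝ => (r : ℂ) * Complex.exp (Complex.I * (θ : ℂ))) := by
    fun_prop
  have hop : IsOpen {z : ℂ | 1 < ‖z‖} := isOpen_lt continuous_const continuous_norm
  have hf : Continuous (fun θ : ℝ => φ ((r : ℂ) * Complex.exp (Complex.I * (θ : ℂ)))) :=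
    hφ.continuousOn.comp_continuous hcurve (curve_mem hr)
  have hw : Continuous (fun θ : ℝ => ‖deriv φ ((r : ℂ) * Complex.exp (Complex.I * (θ : ℂ)))‖) :=
    ((hφ.deriv hop).continuousOn.comp_continuous hcurve (curve_mem hr)).norm
  obtain ⟨hJ, hJle⟩ := JW_main hf hw hr0 (low_bound φ φ₀ c hLaurent hr) n
  have hZ : ∀ m, Zn φ m r = (1 / (m.factorial * r ^ (m * (m - 1)))) *
    JW (fun θ : ℝ => φ ((r : ℂ) * Complex.exp (Complex.I * (θ : ℂ))))
      (fun θ : ℝ => ‖deriv φ ((r : ℂ) * Complex.exp (Complex.I * (θ : ℂ)))‖) m := fun m => rfl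
  unfold En
  rw [hZ, hZ]
  refine Real.log_le_log (by positivity) ?_
  set A := JW (fun θ : ℝ => φ ((r : ℂ) * Complex.exp (Complex.I * (θ : ℂ))))
      (fun θ : ℝ => ‖deriv φ ((r : ℂ) * Complex.exp (Complex.I * (θ : ℂ)))‖) n
  set B := JW (fun θ : ℝ => φ ((r : ℂ) * Complex.exp (Complex.I * (θ : ℂ))))
      (fun θ : ℝ => ‖deriv φ ((r : ℂ) * Complex.exp (Complex.I * (θ : ℂ)))‖) (n + 1)
  have hpow : r ^ ((n + 1) * (n + 1 - 1)) = r ^ (n * (n - 1)) * r ^ (2 * n) := by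
    rw [← pow_add]
    congr 1
    obtain ⟨m, rfl⟩ : ∃ m, n = m + 1 := ⟨n - 1, by omega⟩
    simp only [Nat.add_sub_cancel]
    ring
  rw [hpow, Nat.factorial_succ]
  push_cast
  have hn1 : (0 : ℝ) < (n + 1) * (2 * Real.pi * r ^ (2 * n)) := by positivity
  have hfac : (0 : ℝ) < n.factorial := by positivity
  calc 1 / ((n.factorial : ℝ) * r ^ (n * (n - 1))) * A / (2 * Real.pi) ^ n
      = 1 / (((n + 1) * (n.factorial : ℝ)) * (r ^ (n * (n - 1)) * r ^ (2 * n))) *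
        ((n + 1) * (2 * Real.pi * r ^ (2 * n)) * A) / (2 * Real.pi) ^ (n + 1) := by
        rw [pow_succ (2 * Real.pi) n]
        field_simp
    _ ≤ _ := by gcongr
end

section
/- Let φ be holomorphic and injective on the exterior disk Δ = {z ∈ ℂ : |z| > 1}, with Laurent expansion φ(z) = z + φ₀ + ∑_{k≥1} φ_{-k} z^{-k} at infinity. Then for every r > 1, every n ≥ 0 and every monic complex polynomial p of degree n: (1/(2π)) ∫_{−π}^{π} |p( φ(r e^{iθ})/r )|² |φ'(r e^{iθ})| dθ ≥ 1. -/
open MeasureTheory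

lemma aux_mean (H : ℂ → ℂ) (s : ℝ) (hs : 0 < s)
    (hH : DifferentiableOn ℂ H (Metric.closedBall 0 s)) (h0 : H 0 = 1) :
    1 ≤ (1 / (2 * Real.pi)) *
      ∫ θ in Set.Icc (-Real.pi) Real.pi, ‖H (circleMap 0 s (-θ))‖ := by
  have h1 : Real.circleAverage H 0 s = H 0 := by
    apply DiffContOnCl.circleAverage
    rw [abs_of_pos hs]
    apply DifferentiableOn.diffContOnCl
    rwa [closure_ball _ hs.ne']
  rw [h0, Real.circleAverage_def] at h1
  have h2 : ‖(∫ θ in (0:ℝ)..2 * Real.pi, H (circleMap 0 s θ))‖ ≤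
      ∫ θ in (0:ℝ)..2 * Real.pi, ‖H (circleMap 0 s θ)‖ :=
    intervalIntegral.norm_integral_le_integral_norm (by positivity)
  have hper : Function.Periodic (fun θ => ‖H (circleMap 0 s θ)‖) (2 * Real.pi) := by
    intro θ
    simp only [periodic_circleMap 0 s θ]
  have h3 := hper.intervalIntegral_add_eq 0 (-Real.pi)
  rw [zero_add, show -Real.pi + 2 * Real.pi = Real.pi by ring] at h3
  have h4 := intervalIntegral.integral_comp_neg (a := -Real.pi) (b := Real.pi)
    (fun θ => ‖H (circleMap 0 s θ)‖)
  rw [neg_neg] at h4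
  rw [integral_Icc_eq_integral_Ioc,
    ← intervalIntegral.integral_of_le (by linarith [Real.pi_pos]), h4, ← h3]
  have h5 := congrArg norm h1
  rw [norm_smul, norm_one, Real.norm_of_nonneg (by positivity)] at h5
  rw [one_div, ← h5]
  gcongr

lemma aux_poly (p : Polynomial ℂ) (a u : ℂ) (hu : u ≠ 0) :
    ∑ k ∈ Finset.range (p.natDegree + 1), p.coeff k * u ^ (p.natDegree - k) * a ^ k
      = u ^ p.natDegree * p.eval (a / u) := by
  rw [Polynomial.eval_eq_sum_range, Finset.mul_sum]
  refine Finset.sum_congr rfl fun k hk => ?_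
  have hk' : k ≤ p.natDegree := by simpa [Nat.lt_succ_iff] using hk
  obtain ⟨m, hm⟩ := Nat.exists_eq_add_of_le hk'
  rw [hm, Nat.add_sub_cancel_left, div_pow, pow_add]
  field_simp

lemma aux_S (c : ℕ → ℂ) (hs : ∀ z : ℂ, 1 < ‖z‖ →
      Summable (fun k : ℕ => ‖c k * z ^ (-(k : ℤ) - 1)‖)) :
    DifferentiableOn ℂ (fun ζ : ℂ => ∑' k : ℕ, c k * ζ ^ (k + 1)) (Metric.ball 0 1) := by
  intro ζ hζ
  have hζ1 : ‖ζ‖ < 1 := by simpa using hζ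
  obtain ⟨ρ, hρ, hρ1⟩ := exists_between hζ1
  have hρ0 : 0 < ρ := (norm_nonneg _).trans_lt hρ
  have h := hs ((ρ : ℂ)⁻¹) (by
    rw [norm_inv, Complex.norm_real, Real.norm_of_nonneg hρ0.le]
    exact (one_lt_inv₀ hρ0).2 hρ1)
  have hd : DifferentiableOn ℂ (fun ζ : ℂ => ∑' k : ℕ, c k * ζ ^ (k + 1)) (Metric.ball 0 ρ) := by
    refine Complex.differentiableOn_tsum_of_summable_norm h (fun i => by fun_prop)
      Metric.isOpen_ball ?_
    intro k w hw
    have hw' : ‖w‖ ≤ ρ := by simpa using (Metric.mem_ball.1 hw).le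
    have e : ((ρ : ℂ)⁻¹) ^ (-(k : ℤ) - 1) = (ρ : ℂ) ^ (k + 1) := by
      rw [inv_zpow', ← zpow_natCast]
      congr 1
      push_cast
      ring
    rw [e, norm_mul, norm_mul, norm_pow, norm_pow, Complex.norm_real, Real.norm_of_nonneg hρ0.le]
    gcongr
  exact (hd.differentiableAt (Metric.isOpen_ball.mem_nhds (by simpa using hρ))).differentiableWithinAt

/-- For a univalent `φ` on the exterior disk with hydrodynamic
normalization, every `r > 1`, every `n ≥ 0` and every monic polynomial `p` of degree
`n`, the squared `L²` norm of `p` on the curve `γ_r` (parametrized by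
`θ ↦ φ(re^{iθ})/r` with arclength weight `|φ'(re^{iθ})|`, divided by `2π`) is `≥ 1`. -/
theorem stmt15 (φ : ℂ → ℂ) (φ₀ : ℂ) (c : ℕ → ℂ)
    (hφ : DifferentiableOn ℂ φ {z : ℂ | 1 < ‖z‖})
    (hinj : Set.InjOn φ {z : ℂ | 1 < ‖z‖})
    (hLaurent : ∀ z : ℂ, 1 < ‖z‖ →
      Summable (fun k : ℕ => ‖c k * z ^ (-(k : ℤ) - 1)‖) ∧
      φ z = z + φ₀ + ∑' k : ℕ, c k * z ^ (-(k : ℤ) - 1)) :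
    ∀ r : ℝ, 1 < r → ∀ (n : ℕ) (p : Polynomial ℂ), p.Monic → p.natDegree = n →
      1 ≤ (1 / (2 * Real.pi)) *
        ∫ θ in Set.Icc (-Real.pi) Real.pi,
          ‖p.eval (φ ((r : ℂ) * Complex.exp (Complex.I * (θ : ℂ))) / (r : ℂ))‖ ^ 2
            * ‖deriv φ ((r : ℂ) * Complex.exp (Complex.I * (θ : ℂ)))‖ := by
  intro r hr n p hp hn
  have hr0 : 0 < r := by linarith
  set A : ℂ → ℂ := fun ζ => 1 + φ₀ * ζ + ζ * ∑' k : ℕ, c k * ζ ^ (k + 1) with hA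
  have hAd : DifferentiableOn ℂ A (Metric.ball 0 1) := by
    have := aux_S c (fun z hz => (hLaurent z hz).1)
    exact (by fun_prop : DifferentiableOn ℂ (fun ζ : ℂ => 1 + φ₀ * ζ) _).add
      (differentiableOn_id.mul this)
  have hA0 : A 0 = 1 := by simp [hA]
  have hAφ : ∀ z : ℂ, 1 < ‖z‖ → φ z = z * A z⁻¹ := by
    intro z hz
    have hz0 : z ≠ 0 := by
      rintro rfl
      simp at hz
      linarith
    rw [(hLaurent z hz).2]
    have e : ∀ k : ℕ, z ^ (-(k : ℤ) - 1) = z⁻¹ ^ (k + 1) := by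
      intro k
      rw [← zpow_natCast, inv_zpow']
      congr 1
      push_cast
      ring
    simp only [e, hA]
    field_simp
  have hA'd : DifferentiableOn ℂ (deriv A) (Metric.ball 0 1) := hAd.deriv Metric.isOpen_ball
  have hφ' : ∀ z : ℂ, 1 < ‖z‖ → deriv φ z = A z⁻¹ - z⁻¹ * deriv A z⁻¹ := by
    intro z hz
    have hz0 : z ≠ 0 := by
      rintro rfl
      simp at hz
      linarith
    have hin : z⁻¹ ∈ Metric.ball (0 : ℂ) 1 := by
      simpa using inv_lt_one_of_one_lt₀ hz
    have hAz := (hAd.differentiableAt (Metric.isOpen_ball.mem_nhds hin)).hasDerivAt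
    have h1 : HasDerivAt (fun z : ℂ => z * A z⁻¹)
        (1 * A z⁻¹ + z * (deriv A z⁻¹ * (-(z ^ 2)⁻¹))) z :=
      (hasDerivAt_id z).mul (hAz.comp z (hasDerivAt_inv hz0))
    have h2 : φ =ᶠ[nhds z] (fun z : ℂ => z * A z⁻¹) := by
      have : {z : ℂ | 1 < ‖z‖} ∈ nhds z :=
        (isOpen_lt continuous_const continuous_norm).mem_nhds hz
      filter_upwards [this] with w hw using hAφ w hw
    rw [h2.deriv_eq, h1.deriv]
    field_simp
    ring
  set P : ℂ → ℂ := fun ζ => ∑ k ∈ Finset.range (p.natDegree + 1),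
    p.coeff k * ((r : ℂ) * ζ) ^ (p.natDegree - k) * A ζ ^ k with hP
  have hPd : DifferentiableOn ℂ P (Metric.ball 0 1) := by
    apply DifferentiableOn.fun_sum
    intro k _
    fun_prop
  have hP0 : P 0 = 1 := by
    simp only [hP, mul_zero, hA0, one_pow, mul_one]
    rw [Finset.sum_range_succ, Finset.sum_eq_zero]
    · simpa using hp.leadingCoeff
    · intro k hk
      have : k < p.natDegree := by simpa using hk
      rw [zero_pow (by omega), mul_zero]
  have hinv : r⁻¹ < 1 := inv_lt_one_of_one_lt₀ hr
  have key := aux_mean (fun ζ => P ζ ^ 2 * (A ζ - ζ * deriv A ζ)) r⁻¹ (by positivity)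
    (by
      have : DifferentiableOn ℂ (fun ζ => P ζ ^ 2 * (A ζ - ζ * deriv A ζ))
        (Metric.ball 0 1) := by fun_prop
      exact this.mono (Metric.closedBall_subset_ball hinv))
    (by simp [hP0, hA0])
  refine key.trans_eq ?_
  congr 1
  refine integral_congr_ae (Filter.Eventually.of_forall fun θ => ?_)
  have hc : circleMap 0 r⁻¹ (-θ) = ((r : ℂ) * Complex.exp (Complex.I * (θ : ℂ)))⁻¹ := by
    rw [circleMap, mul_inv, ← Complex.exp_neg]
    push_cast
    rw [zero_add]
    congr 2
    ring
  simp only [hc]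
  set z : ℂ := (r : ℂ) * Complex.exp (Complex.I * (θ : ℂ)) with hz
  have hnz : ‖z‖ = r := by
    rw [hz, norm_mul, mul_comm Complex.I, Complex.norm_exp_ofReal_mul_I, Complex.norm_real,
      Real.norm_of_nonneg hr0.le, mul_one]
  have hz1 : 1 < ‖z‖ := by rwa [hnz]
  have hz0 : z ≠ 0 := by
    rw [← norm_pos_iff, hnz]
    exact hr0
  have hrc : (r : ℂ) ≠ 0 := by exact_mod_cast hr0.ne'
  have hu : (r : ℂ) * z⁻¹ ≠ 0 := mul_ne_zero hrc (inv_ne_zero hz0)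
  have hPz : ‖P z⁻¹‖ = ‖p.eval (φ z / (r : ℂ))‖ := by
    simp only [hP]
    rw [aux_poly p _ _ hu, norm_mul, norm_pow, norm_mul, norm_inv, hnz, Complex.norm_real,
      Real.norm_of_nonneg hr0.le, mul_inv_cancel₀ hr0.ne', one_pow, one_mul, hAφ z hz1]
    congr 2
    field_simp
  rw [norm_mul, norm_pow, hPz, hφ' z hz1]
end
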